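/- Let J denote the Jacobson radical of u. For every 1 ≤ i ≤ n²/2 and j ∈ {0,1}, writing j' := 1−j: (1) P_{2i,j}/J·P_{2i,j} ≅ S_{2i,j}; (2) J·P_{2i,j}/J²·P_{2i,j} ≅ S_{n²−2i+2,j'} ⊕ S_{n²−2i+2,j'}; (3) J²·P_{2i,j} = Soc(P_{2i,j}) and J²·P_{2i,j} ≅ S_{2i,j} as left u-modules. -/

import Mathlib

noncomputable section

open scoped TensorProduct

namespace QFL

/-- The defining relations of the quasi-Frobenius-Lusztig kernel `ũ_q(sl₂)`,
on the free algebra on four generators `K = ι 0`, `K̂ = ι 1`, `E = ι 2`, `F = ι 3`. -/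
inductive Rel (k : Type) [Field k] (n : ℕ) (q : k) :
    FreeAlgebra k (Fin 4) → FreeAlgebra k (Fin 4) → Prop
  | Kord : Rel k n q (FreeAlgebra.ι k (0 : Fin 4) ^ n) 1
  | Khord : Rel k n q (FreeAlgebra.ι k (1 : Fin 4) ^ n)
      ((FreeAlgebra.ι k (0 : Fin 4) ^ (n - 1)) ^ 2)
  | KKh : Rel k n q (FreeAlgebra.ι k (0 : Fin 4) * FreeAlgebra.ι k (1 : Fin 4))
      (FreeAlgebra.ι k (1 : Fin 4) * FreeAlgebra.ι k (0 : Fin 4))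
  | KE : Rel k n q
      (FreeAlgebra.ι k (0 : Fin 4) * FreeAlgebra.ι k (2 : Fin 4) *
        FreeAlgebra.ι k (0 : Fin 4) ^ (n - 1))
      (q ^ n • FreeAlgebra.ι k (2 : Fin 4))
  | KF : Rel k n q
      (FreeAlgebra.ι k (0 : Fin 4) * FreeAlgebra.ι k (3 : Fin 4) *
        FreeAlgebra.ι k (0 : Fin 4) ^ (n - 1))
      ((q ^ n)⁻¹ • FreeAlgebra.ι k (3 : Fin 4))
  | KhE : Rel k n q
      (FreeAlgebra.ι k (1 : Fin 4) * FreeAlgebra.ι k (2 : Fin 4) *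
        FreeAlgebra.ι k (1 : Fin 4) ^ (n ^ 2 - 1))
      ((q ^ n * (q ^ 2)⁻¹) • FreeAlgebra.ι k (2 : Fin 4))
  | KhF : Rel k n q
      (FreeAlgebra.ι k (1 : Fin 4) * FreeAlgebra.ι k (3 : Fin 4) *
        FreeAlgebra.ι k (1 : Fin 4) ^ (n ^ 2 - 1))
      (((q ^ n)⁻¹ * q ^ 2) • FreeAlgebra.ι k (3 : Fin 4))
  | Enil : Rel k n q (FreeAlgebra.ι k (2 : Fin 4) ^ n ^ 2) 0
  | Fnil : Rel k n q (FreeAlgebra.ι k (3 : Fin 4) ^ n ^ 2) 0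
  | EF : Rel k n q
      (FreeAlgebra.ι k (3 : Fin 4) * FreeAlgebra.ι k (2 : Fin 4) -
        q⁻¹ • (FreeAlgebra.ι k (2 : Fin 4) * FreeAlgebra.ι k (3 : Fin 4)))
      (1 - FreeAlgebra.ι k (0 : Fin 4) ^ (n - 1) * FreeAlgebra.ι k (1 : Fin 4))

/-- The algebra `ũ_q(sl₂)` as the quotient of the free algebra by the defining relations. -/
abbrev U (k : Type) [Field k] (n : ℕ) (q : k) := RingQuot (Rel k n q)

variable (k : Type) [Field k] (n : ℕ) (q : k)

def K : U k n q := RingQuot.mkAlgHom k (Rel k n q) (FreeAlgebra.ι k (0 : Fin 4))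
def Kh : U k n q := RingQuot.mkAlgHom k (Rel k n q) (FreeAlgebra.ι k (1 : Fin 4))
def E : U k n q := RingQuot.mkAlgHom k (Rel k n q) (FreeAlgebra.ι k (2 : Fin 4))
def F : U k n q := RingQuot.mkAlgHom k (Rel k n q) (FreeAlgebra.ι k (3 : Fin 4))

/-- `K⁻¹ = K^(n-1)`. -/
def Kinv : U k n q := K k n q ^ (n - 1)
/-- `K̂⁻¹ = K̂^(n²-1)`. -/
def Khinv : U k n q := Kh k n q ^ (n ^ 2 - 1)

/-- `φ_{2i} = (2/n²) Σ_{t<n²/2} q^{-2it} (K⁻¹K̂)^t`. -/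
def phi (i : ℕ) : U k n q :=
  ((n ^ 2 : k)⁻¹ * 2) • ∑ t ∈ Finset.range (n ^ 2 / 2),
    (q⁻¹ ^ (2 * i * t)) • (Kinv k n q * Kh k n q) ^ t

/-- `𝟙₀ = (1/2)(1 + KK̂^(n/2))` and `𝟙₁ = (1/2)(1 - KK̂^(n/2))`. -/
def oneJ (j : ℕ) : U k n q :=
  if j = 0 then (2 : k)⁻¹ • (1 + K k n q * Kh k n q ^ (n / 2))
  else (2 : k)⁻¹ • (1 - K k n q * Kh k n q ^ (n / 2))

/-- The idempotent `e_{2i,j} = φ_{2i} 𝟙_j`. -/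
def eIdem (i j : ℕ) : U k n q := phi k n q i * oneJ k n q j

/-- `α_{2i,j} = F^(n²-1) e_{2i,j}`. -/
def alpha (i j : ℕ) : U k n q := F k n q ^ (n ^ 2 - 1) * eIdem k n q i j

/-- `β_{2i,j} = E^(2i-2) α_{2i,j}`. -/
def beta (i j : ℕ) : U k n q := E k n q ^ (2 * i - 2) * alpha k n q i j

/-- The Gaussian number `s_q = 1 + q + ⋯ + q^(s-1)`. -/
def gauss (x : k) (s : ℕ) : k := ∑ t ∈ Finset.range s, x ^ t

/-- The span of the PBW-type monomials `F^a K^c K̂^d E^b` with `a ≤ n²-2`, `b ≤ n²-1`,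
`c ≤ n-1`, `d ≤ n²-1`. -/
def pbw : Submodule k (U k n q) :=
  Submodule.span k {x | ∃ a b c d : ℕ, a ≤ n ^ 2 - 2 ∧ b ≤ n ^ 2 - 1 ∧ c ≤ n - 1 ∧
    d ≤ n ^ 2 - 1 ∧ x = F k n q ^ a * K k n q ^ c * Kh k n q ^ d * E k n q ^ b}

/-- `γ_{2i,j}`: the unique element of the PBW span with `F·γ = β_{2i,j}`. -/
def gam (i j : ℕ) : U k n q :=
  @dite _ (∃! x, x ∈ pbw k n q ∧ F k n q * x = beta k n q i j)
    (Classical.propDecidable _) (fun h => h.choose) (fun _ => 0)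

/-- The left ideal `P_{2i,j} = u·γ_{2i,j}`. -/
def P (i j : ℕ) : Submodule (U k n q) (U k n q) :=
  Submodule.span (U k n q) {gam k n q i j}

/-- `S_{2i,j} = Soc(P_{2i,j})`, the sum of all simple submodules of `P_{2i,j}`. -/
def S (i j : ℕ) : Submodule (U k n q) (U k n q) :=
  sSup {N : Submodule (U k n q) (U k n q) | N ≤ P k n q i j ∧ IsSimpleModule (U k n q) N}

end QFL

namespace QFL

variable (k : Type) [Field k] (n : ℕ) (q : k)

/-- The product `A·B` of a left ideal `A` and a left ideal `B` of `u`: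
the span of all products `a*b`. -/
def idealMul (A B : Submodule (U k n q) (U k n q)) : Submodule (U k n q) (U k n q) :=
  Submodule.span (U k n q) {x | ∃ a ∈ A, ∃ b ∈ B, x = a * b}

/-- The Jacobson radical of `u`. -/
def jrad : Submodule (U k n q) (U k n q) := (⊥ : Ideal (U k n q)).jacobson

end QFL

/-!
Put `N = n²` and `d = 2i - 1`. The torus of `u` is generated by `L = K⁻¹K̂` of order `N / 2` and
the involution `T = KK̂^(n/2)`. The vector `α` is a lowest weight vector and `F γ = E^(d-1) α`, so
`P = u γ` is spanned by the two strings `E^s α` and `E^s γ` with `s < N`. Along a string, `F` acts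
with coefficients of which, for `0 < s < N`, only one vanishes: at `s = d` on the string of `α`,
and at `s = N - d` on the string of `γ` taken modulo that of `α`. Hence `E^d α` generates the
socle, the submodule `R` generated by `α` and `E^(N-d) γ` is modulo the socle a sum of two
isomorphic simple modules, and `P / R` is isomorphic to the socle because both are simple with the
same lowest weight.

Every simple `u`-module is a string of length `N - e` with `e` odd, hence shorter than `N`.
Therefore `E^(N-1)` and `F^(N-1)` lie in the Jacobson radical `J`, and applying them to the strings
gives `R ≤ J P` and `Soc P ≤ J R`. The reverse inclusions hold because `J` annihilates the
semisimple modules `P / R` and `R / Soc P`.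

That the strings do not collapse, and that `γ` is unique, replaces the PBW theorem: the defining
relations hold for explicit operators on a space with basis two linked strings, and these
representations show that `E^(N-1) F^(N-1)` and `F^(N-1) E^(N-1)` vanish in no weight of `u`.
-/

namespace QFL

/-! ### Commutation up to a scalar -/

section QCommute

variable {k A M : Type*} [Field k] [Ring A] [Algebra k A]

/-- `X` and `Y` commute up to the scalar `c`. -/
def QCommute (c : k) (X Y : A) : Prop := X * Y = c • (Y * X)

namespace QCommute

variable {c d : k} {X Y Z : A}

lemma eq (h : QCommute c X Y) : X * Y = c • (Y * X) := h

lemma symm (h : QCommute c X Y) (hc : c ≠ 0) : QCommute c⁻¹ Y X := by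
  rw [QCommute, h.eq, inv_smul_smul₀ hc]

lemma mul_left (hX : QCommute c X Z) (hY : QCommute d Y Z) : QCommute (c * d) (X * Y) Z := by
  rw [QCommute, mul_assoc, hY.eq, mul_smul_comm, ← mul_assoc, hX.eq, smul_mul_assoc, smul_smul,
    mul_comm d, mul_assoc]

lemma mul_right (hY : QCommute c X Y) (hZ : QCommute d X Z) : QCommute (c * d) X (Y * Z) := by
  rw [QCommute, ← mul_assoc, hY.eq, smul_mul_assoc, mul_assoc, hZ.eq, mul_smul_comm, smul_smul,
    mul_assoc]

lemma pow_left (h : QCommute c X Y) (s : ℕ) : QCommute (c ^ s) (X ^ s) Y := by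
  induction s with
  | zero => simp [QCommute]
  | succ s ih => simpa only [pow_succ] using ih.mul_left h

lemma pow_right (h : QCommute c X Y) (s : ℕ) : QCommute (c ^ s) X (Y ^ s) := by
  induction s with
  | zero => simp [QCommute]
  | succ s ih => simpa only [pow_succ] using ih.mul_right h

lemma smul_pow_smul [AddCommGroup M] [Module k M] [Module A M] [IsScalarTower k A M]
    (h : QCommute c X Y) {a : k} {v : M} (hv : X • v = a • v) (s : ℕ) :
    X • Y ^ s • v = (a * c ^ s) • Y ^ s • v := by
  rw [smul_smul, (h.pow_right s).eq, smul_assoc, mul_smul, hv, smul_comm (Y ^ s) a, smul_smul,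
    mul_comm]

end QCommute

end QCommute

section CyclicSum

variable {k A M : Type*} [Field k] [Ring A] [Algebra k A]

/-- `∑_{t < m} ζ^t X^t`: when `X ^ m = 1` and `ζ ^ m = 1` it is `m` times the projector onto the
eigenspace of `X` for the eigenvalue `ζ⁻¹`. -/
def cyclicSum (m : ℕ) (ζ : k) (X : A) : A := ∑ t ∈ Finset.range m, ζ ^ t • X ^ t

variable {m : ℕ} {c ζ : k} {X Y : A}

lemma QCommute.mul_cyclicSum (h : QCommute c Y X) :
    Y * cyclicSum m ζ X = cyclicSum m (c * ζ) X * Y := by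
  simp only [cyclicSum, Finset.mul_sum, Finset.sum_mul]
  refine Finset.sum_congr rfl fun t _ => ?_
  rw [mul_smul_comm, (h.pow_right t).eq, smul_smul, smul_mul_assoc, mul_pow, mul_comm]

lemma QCommute.pow_mul_cyclicSum (h : QCommute c Y X) (s : ℕ) :
    Y ^ s * cyclicSum m ζ X = cyclicSum m (c ^ s * ζ) X * Y ^ s :=
  (h.pow_left s).mul_cyclicSum

lemma commute_cyclicSum (h : Commute Y X) : Commute Y (cyclicSum m ζ X) :=
  Commute.sum_right _ _ _ fun t _ => (h.pow_right t).smul_right _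

lemma smul_mul_cyclicSum (hX : X ^ m = 1) (hζ : ζ ^ m = 1) :
    ζ • (X * cyclicSum m ζ X) = cyclicSum m ζ X := by
  have hshift := (Finset.sum_range_succ' (fun t => ζ ^ t • X ^ t) m).symm.trans
    (Finset.sum_range_succ (fun t => ζ ^ t • X ^ t) m)
  simp only [hX, hζ, pow_zero, add_left_inj] at hshift
  rw [cyclicSum, Finset.mul_sum, Finset.smul_sum]
  refine Eq.trans (Finset.sum_congr rfl fun t _ => ?_) hshift
  rw [mul_smul_comm, smul_smul, ← pow_succ', ← pow_succ']

lemma mul_cyclicSum (hX : X ^ m = 1) (hζ : ζ ^ m = 1) (hc : c * ζ = 1) :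
    X * cyclicSum m ζ X = c • cyclicSum m ζ X := by
  conv_rhs => rw [← smul_mul_cyclicSum hX hζ, smul_smul, hc, one_smul]

lemma sum_cyclicSum (hζ : IsPrimitiveRoot ζ m) :
    ∑ i ∈ Finset.range m, cyclicSum m (ζ ^ i) X = (m : k) • (1 : A) := by
  rcases m.eq_zero_or_pos with rfl | hm
  · simp
  simp only [cyclicSum]
  rw [Finset.sum_comm, Finset.sum_eq_single_of_mem 0 (Finset.mem_range.2 hm)]
  · simp [← Nat.cast_smul_eq_nsmul k]
  intro t ht ht0
  rw [Finset.mem_range] at ht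
  have hsum : ∑ i ∈ Finset.range m, (ζ ^ t) ^ i = 0 := by
    have hne := sub_ne_zero.2 (hζ.pow_ne_one_of_pos_of_lt ht0 ht)
    have hgeom := mul_geom_sum (ζ ^ t) m
    rw [← pow_mul, mul_comm t, pow_mul, hζ.pow_eq_one, one_pow, sub_self] at hgeom
    exact (mul_eq_zero.1 hgeom).resolve_left hne
  simp only [← Finset.sum_smul, ← pow_mul, mul_comm _ t] at hsum ⊢
  rw [hsum, zero_smul]

variable [AddCommGroup M] [Module k M] [Module A M] [IsScalarTower k A M]

lemma cyclicSum_smul {a : k} {v : M} (hv : X • v = a • v) (ha : ζ * a = 1) :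
    cyclicSum m ζ X • v = (m : k) • v := by
  have hpow : ∀ t, X ^ t • v = a ^ t • v := by
    intro t
    induction t with
    | zero => simp
    | succ t ih => rw [pow_succ, mul_smul, hv, smul_comm, ih, smul_smul, ← pow_succ']
  simp only [cyclicSum, Finset.sum_smul, smul_assoc, hpow, smul_smul, ← mul_pow, ha, one_pow,
    one_smul, Finset.sum_const, Finset.card_range, ← Nat.cast_smul_eq_nsmul k]

lemma exists_cyclicSum_smul_ne_zero (hζ : IsPrimitiveRoot ζ m) (hm : (m : k) ≠ 0) {v : M}
    (hv : v ≠ 0) (X : A) : ∃ i < m, cyclicSum m (ζ ^ i) X • v ≠ 0 := by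
  by_contra! h
  have hsum := congrArg (· • v) (sum_cyclicSum (X := X) hζ)
  simp only [Finset.sum_smul, smul_assoc, one_smul] at hsum
  rw [Finset.sum_eq_zero fun i hi => h i (Finset.mem_range.1 hi)] at hsum
  exact smul_ne_zero hm hv hsum.symm

end CyclicSum

section Polynomial

open Polynomial

variable {k A M : Type*} [Field k] [Ring A] [Algebra k A] [AddCommGroup M] [Module A M]
  {E : A} {v : M}

lemma aeval_mul_X_pow_smul (E : A) (r : k[X]) (m : ℕ) (v : M) :
    aeval E (r * X ^ m) • v = aeval E r • E ^ m • v := by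
  rw [map_mul, map_pow, aeval_X, mul_smul]

lemma pow_smul_aeval_smul (E : A) (r : k[X]) (m : ℕ) (v : M) :
    E ^ m • aeval E r • v = aeval E r • E ^ m • v := by
  rw [← aeval_mul_X_pow_smul, mul_comm, map_mul, map_pow, aeval_X, mul_smul]

lemma aeval_smul_eq_zero_of_X_pow_dvd {m : ℕ} (hv : E ^ m • v = 0) {r : k[X]} (hr : X ^ m ∣ r) :
    aeval E r • v = 0 := by
  obtain ⟨s, rfl⟩ := hr
  rw [mul_comm, aeval_mul_X_pow_smul, hv, smul_zero]

lemma eq_zero_of_eq_aeval_smul_pow_smul {m : ℕ} (hE : IsNilpotent E) (hm : m ≠ 0) {r : k[X]}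
    (hv : v = aeval E r • E ^ m • v) : v = 0 := by
  rw [← aeval_mul_X_pow_smul] at hv
  have hnil : IsNilpotent (aeval E (r * X ^ m)) := by
    have hpow : IsNilpotent (aeval E (X ^ m : k[X])) := by
      simpa only [map_pow, aeval_X] using hE.pow_of_pos hm
    rw [map_mul]
    exact ((Commute.all r (X ^ m)).map (aeval E)).isNilpotent_mul_left hpow
  exact (hnil.isUnit_one_sub.smul_eq_zero).1 (by rw [sub_smul, one_smul, ← hv, sub_self])

lemma exists_pow_smul_ne_zero {Y : A} {n : ℕ} (hY : Y ^ n = 0) {x : M} (hx : x ≠ 0) :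
    ∃ t, Y ^ t • x ≠ 0 ∧ Y • Y ^ t • x = 0 := by
  obtain ⟨t, ht, ht'⟩ := Nat.exists_not_and_succ_of_not_zero_of_exists
    (p := fun t => Y ^ t • x = 0) (by simpa using hx) ⟨n, by rw [hY, zero_smul]⟩
  exact ⟨t, ht, by rwa [smul_smul, ← pow_succ']⟩

variable [Module k M] [IsScalarTower k A M]

lemma aeval_monomial_smul (E : A) (c : k) (m : ℕ) (v : M) :
    aeval E (monomial m c) • v = c • E ^ m • v := by
  rw [aeval_monomial, mul_smul, algebraMap_smul]

lemma aeval_smul_of_smul_eq_zero (hv : E • v = 0) (r : k[X]) :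
    aeval E r • v = r.coeff 0 • v := by
  conv_lhs => rw [← divX_mul_X_add r]
  rw [map_add, map_mul, aeval_X, aeval_C, add_smul, mul_smul, hv, smul_zero, zero_add,
    algebraMap_smul]

lemma pow_smul_aeval_X_pow_mul_smul {m n : ℕ} (hmn : m < n) (hv : E ^ n • v = 0) (r : k[X]) :
    E ^ (n - 1 - m) • aeval E (X ^ m * r) • v = r.coeff 0 • E ^ (n - 1) • v := by
  have hE : E • E ^ (n - 1) • v = 0 := by
    rw [smul_smul, ← pow_succ', Nat.sub_add_cancel (by omega), hv]
  rw [pow_smul_aeval_smul, mul_comm, aeval_mul_X_pow_smul, smul_smul (E ^ m), ← pow_add,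
    show m + (n - 1 - m) = n - 1 by omega, aeval_smul_of_smul_eq_zero hE]

lemma aeval_smul_eq_zero_iff {n : ℕ} (hv : E ^ n • v = 0) (hne : E ^ (n - 1) • v ≠ 0) (r : k[X]) :
    aeval E r • v = 0 ↔ X ^ n ∣ r := by
  refine ⟨fun h => ?_, aeval_smul_eq_zero_of_X_pow_dvd hv⟩
  suffices key : ∀ m ≤ n, X ^ m ∣ r from key n le_rfl
  intro m hm
  induction m with
  | zero => simp
  | succ m ih =>
    obtain ⟨s, rfl⟩ := ih (by omega)
    have hcoeff := pow_smul_aeval_X_pow_mul_smul hm hv s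
    rw [h, smul_zero] at hcoeff
    rw [pow_succ]
    exact mul_dvd_mul_left _ (X_dvd_iff.2 ((smul_eq_zero.1 hcoeff.symm).resolve_right hne))

lemma exists_smul_aeval_smul_eq {Y : A} (hY : ∀ s, ∃ r : k[X], Y • E ^ s • v = aeval E r • v)
    (r : k[X]) : ∃ r' : k[X], Y • aeval E r • v = aeval E r' • v := by
  induction r using Polynomial.induction_on' with
  | add r s hr hs =>
    obtain ⟨r', hr⟩ := hr
    obtain ⟨s', hs⟩ := hs
    exact ⟨r' + s', by rw [map_add, map_add, add_smul, add_smul, smul_add, hr, hs]⟩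
  | monomial m c =>
    obtain ⟨r, hr⟩ := hY m
    exact ⟨C c * r, by
      rw [aeval_monomial_smul, smul_comm, hr, map_mul, aeval_C, mul_smul, algebraMap_smul]⟩

lemma exists_smul_eq_aeval_smul {G : Set A} (hG : Algebra.adjoin k G = ⊤)
    (hY : ∀ Y ∈ G, ∀ s, ∃ r : k[X], Y • E ^ s • v = aeval E r • v) (a : A) :
    ∃ r : k[X], a • v = aeval E r • v := by
  suffices h : ∀ r : k[X], ∃ r' : k[X], a • aeval E r • v = aeval E r' • v by
    simpa using h 1
  have ha : a ∈ Algebra.adjoin k G := hG ▸ Algebra.mem_top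
  induction ha using Algebra.adjoin_induction with
  | mem Y hYG => exact exists_smul_aeval_smul_eq (hY Y hYG)
  | algebraMap c => exact fun r => ⟨C c * r, by rw [map_mul, aeval_C, mul_smul]⟩
  | add a b _ _ ha hb =>
    intro r
    obtain ⟨r₁, h₁⟩ := ha r
    obtain ⟨r₂, h₂⟩ := hb r
    exact ⟨r₁ + r₂, by rw [add_smul, h₁, h₂, map_add, add_smul]⟩
  | mul a b _ _ ha hb =>
    intro r
    obtain ⟨r₁, h₁⟩ := hb r
    obtain ⟨r₂, h₂⟩ := ha r₁
    exact ⟨r₂, by rw [mul_smul, h₁, h₂]⟩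

end Polynomial

section StringCoeff

variable {k : Type*} [Field k] {N : ℕ} {p : k}

/-- The coefficient with which `F` lowers the `s`-th vector `E ^ s • v` of the string of a lowest
weight vector `v` of weight `e`. -/
def stringCoeff (p : k) (e s : ℕ) : k := (1 - p ^ s) * (1 - p ^ (e + s)) / (1 - p)

lemma stringCoeff_zero (p : k) (e : ℕ) : stringCoeff p e 0 = 0 := by simp [stringCoeff]

lemma stringCoeff_succ (hp : p ≠ 1) (e s : ℕ) :
    stringCoeff p e (s + 1) = p * stringCoeff p e s + (1 - p ^ (e + 1 + 2 * s)) := by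
  have hp' : 1 - p ≠ 0 := sub_ne_zero.2 hp.symm
  unfold stringCoeff
  field_simp
  ring

lemma stringCoeff_eq_zero (hp : IsPrimitiveRoot p N) {e s : ℕ} (h : N ∣ e + s) :
    stringCoeff p e s = 0 := by
  simp [stringCoeff, (hp.pow_eq_one_iff_dvd _).2 h]

lemma stringCoeff_ne_zero (hp : IsPrimitiveRoot p N) {e s : ℕ} (he : e < N) (hs : 0 < s)
    (hsN : s < N) (hes : e + s ≠ N) : stringCoeff p e s ≠ 0 := by
  have hne : ∀ t, ¬ N ∣ t → 1 - p ^ t ≠ 0 := fun t ht =>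
    sub_ne_zero.2 fun h => ht ((hp.pow_eq_one_iff_dvd t).1 h.symm)
  have hdvd : ¬ N ∣ e + s := fun h => by
    obtain ⟨c, hc⟩ := h
    have : c < 2 := lt_of_mul_lt_mul_left (hc ▸ by omega : N * c < N * 2) N.zero_le
    interval_cases c <;> omega
  have hone : 1 - p ≠ 0 := by simpa using hne 1 (Nat.not_dvd_of_pos_of_lt one_pos (by omega))
  exact div_ne_zero (mul_ne_zero (hne s (Nat.not_dvd_of_pos_of_lt hs hsN)) (hne _ hdvd)) hone

end StringCoeff

open Polynomial hiding X

/-! ### Lowest weight vectors -/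

/-- The generators `E`, `F`, `L = K⁻¹K̂`, `T = KK̂^(n/2)` of `ũ_q(sl₂)` with their relations, for
`N = n²` and `p = q⁻¹`, except for `F ^ N = 0`, which is only imposed where it is needed. -/
structure Sl2Generators {k : Type*} [Field k] (A : Type*) [Ring A] [Algebra k A]
    (N : ℕ) (p : k) where
  E : A
  F : A
  L : A
  T : A
  isPrimitiveRoot : IsPrimitiveRoot p N
  pos : 0 < N
  even : Even N
  L_pow : L ^ (N / 2) = 1
  T_pow : T ^ 2 = 1
  commute : Commute L T
  qCommute_L_E : QCommute (p ^ 2) L E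
  qCommute_F_L : QCommute (p ^ 2) F L
  qCommute_T_E : QCommute (-1 : k) T E
  qCommute_F_T : QCommute (-1 : k) F T
  E_pow : E ^ N = 0
  F_mul_E : F * E = p • (E * F) + 1 - L

namespace Sl2Generators

variable {k A M : Type*} [Field k] [Ring A] [Algebra k A]
  [AddCommGroup M] [Module A M] {N : ℕ} {p : k}

lemma one_lt (X : Sl2Generators A N p) : 1 < N := by
  have := X.pos
  have := X.even.two_dvd
  omega

lemma p_ne_one (X : Sl2Generators A N p) : p ≠ 1 := X.isPrimitiveRoot.ne_one X.one_lt

lemma p_ne_zero (X : Sl2Generators A N p) : p ≠ 0 := X.isPrimitiveRoot.ne_zero X.pos.ne'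

lemma natCast_ne_zero (X : Sl2Generators A N p) : (N : k) ≠ 0 :=
  have : NeZero N := ⟨X.pos.ne'⟩
  X.isPrimitiveRoot.neZero'.ne

lemma half_ne_zero (X : Sl2Generators A N p) : ((N / 2 : ℕ) : k) ≠ 0 := fun h =>
  X.natCast_ne_zero <| by rw [← Nat.div_mul_cancel X.even.two_dvd, Nat.cast_mul, h, zero_mul]

lemma two_ne_zero (X : Sl2Generators A N p) : (2 : k) ≠ 0 := fun h => X.natCast_ne_zero <| by
  rw [← Nat.div_mul_cancel X.even.two_dvd, Nat.cast_mul, Nat.cast_ofNat, h, mul_zero]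

lemma pow_add_card (X : Sl2Generators A N p) (a : ℕ) : p ^ (a + N) = p ^ a := by
  rw [pow_add, X.isPrimitiveRoot.pow_eq_one, mul_one]

variable {X : Sl2Generators A N p}

lemma E_pow_smul_of_le {s : ℕ} (hs : N ≤ s) (v : M) : X.E ^ s • v = 0 := by
  rw [pow_eq_zero_of_le hs X.E_pow, zero_smul]

variable [Module k M] [IsScalarTower k A M]

lemma L_smul_E_pow_smul {e : ℕ} {v : M} (hv : X.L • v = p ^ e • v) (s : ℕ) :
    X.L • X.E ^ s • v = p ^ (e + 2 * s) • X.E ^ s • v := by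
  rw [X.qCommute_L_E.smul_pow_smul hv, pow_add, pow_mul]

lemma T_smul_E_pow_smul {τ : k} {v : M} (hv : X.T • v = τ • v) (s : ℕ) :
    X.T • X.E ^ s • v = ((-1) ^ s * τ) • X.E ^ s • v := by
  rw [X.qCommute_T_E.smul_pow_smul hv, mul_comm]

lemma F_smul_E_pow_succ_smul {e : ℕ} {v : M} (hv : X.L • v = p ^ (e + 1) • v) (s : ℕ) :
    X.F • X.E ^ (s + 1) • v =
      p ^ (s + 1) • X.E ^ (s + 1) • X.F • v + stringCoeff p e (s + 1) • X.E ^ s • v := by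
  have hstep : ∀ w : M, X.F • X.E • w = p • X.E • X.F • w + w - X.L • w := fun w => by
    rw [← mul_smul, X.F_mul_E, sub_smul, add_smul, smul_assoc, mul_smul, one_smul]
  have hE : ∀ (t : ℕ) (w : M), X.E • X.E ^ t • w = X.E ^ (t + 1) • w := fun t w => by
    rw [smul_smul, ← pow_succ']
  induction s with
  | zero =>
    rw [stringCoeff_succ X.p_ne_one, stringCoeff_zero]
    simp only [zero_add, pow_one, pow_zero, one_smul, mul_zero, add_zero, sub_smul, hstep, hv]
    abel
  | succ s ih =>
    rw [← hE, hstep, ih, X.L_smul_E_pow_smul hv, stringCoeff_succ X.p_ne_one e (s + 1), smul_add,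
      smul_comm X.E (p ^ (s + 1)), smul_comm X.E (stringCoeff p e (s + 1)), hE, hE]
    generalize X.E ^ (s + 1 + 1) • X.F • v = x
    generalize X.E ^ (s + 1) • v = y
    module

variable (X) in
/-- `v` is annihilated by `F`, is an eigenvector of `L` for `p ^ (e + 1)` and of `T` for `τ`. -/
structure IsLowestWeight (e : ℕ) (τ : k) (v : M) : Prop where
  F_smul : X.F • v = 0
  L_smul : X.L • v = p ^ (e + 1) • v
  T_smul : X.T • v = τ • v

variable (X) in
/-- A nonzero lowest weight vector with `E ^ (N - e) • v = 0`; for `0 < e < N` these are the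
lowest weight vectors that generate a simple module, of dimension `N - e`. -/
structure IsSimpleLowestWeight (e : ℕ) (τ : k) (v : M) : Prop extends
    X.IsLowestWeight e τ v where
  ne_zero : v ≠ 0
  E_pow_smul : X.E ^ (N - e) • v = 0

lemma exists_pow_smul_eq_smul {F : A} {x : ℕ → M} {s r : ℕ}
    (hx : ∀ t, s ≤ t → t < s + r → ∃ c : k, c ≠ 0 ∧ F • x (t + 1) = c • x t) :
    ∃ C : k, C ≠ 0 ∧ F ^ r • x (s + r) = C • x s := by
  induction r with
  | zero => exact ⟨1, one_ne_zero, by simp⟩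
  | succ r ih =>
    obtain ⟨C, hC, hr⟩ := ih fun t hs ht => hx t hs (by omega)
    obtain ⟨c, hc, hF⟩ := hx (s + r) (by omega) (by omega)
    exact ⟨c * C, mul_ne_zero hc hC, by
      rw [← add_assoc, pow_succ, mul_smul, hF, smul_comm, hr, smul_smul]⟩

namespace IsLowestWeight

variable {e : ℕ} {τ : k} {v : M}

lemma F_smul_E_pow_succ_smul (h : X.IsLowestWeight e τ v) (s : ℕ) :
    X.F • X.E ^ (s + 1) • v = stringCoeff p e (s + 1) • X.E ^ s • v := by
  rw [Sl2Generators.F_smul_E_pow_succ_smul h.L_smul, h.F_smul, smul_zero, smul_zero, zero_add]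

lemma E_pow_smul (h : X.IsLowestWeight e τ v) {s : ℕ} (hs : e + s = N) :
    X.IsLowestWeight s ((-1) ^ s * τ) (X.E ^ s • v) where
  F_smul := by
    cases s with
    | zero => rw [pow_zero, one_smul, h.F_smul]
    | succ s =>
      rw [h.F_smul_E_pow_succ_smul, stringCoeff_eq_zero X.isPrimitiveRoot (by rw [hs]), zero_smul]
  L_smul := by
    rw [L_smul_E_pow_smul h.L_smul, ← X.pow_add_card (s + 1),
      show e + 1 + 2 * s = s + 1 + N by omega]
  T_smul := T_smul_E_pow_smul h.T_smul s

lemma F_pow_smul_E_pow_smul_of_lt (h : X.IsLowestWeight e τ v) {s r : ℕ} (hsr : s < r) :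
    X.F ^ r • X.E ^ s • v = 0 := by
  induction s generalizing r with
  | zero => rw [pow_zero, one_smul, ← Nat.sub_add_cancel hsr, pow_succ, mul_smul, h.F_smul,
      smul_zero]
  | succ s ih =>
    obtain ⟨r, rfl⟩ := Nat.exists_eq_add_of_lt hsr
    rw [pow_succ, mul_smul, h.F_smul_E_pow_succ_smul, smul_comm, ih (by omega), smul_zero]

lemma exists_F_pow_smul_E_pow_smul_eq (h : X.IsLowestWeight e τ v) {r : ℕ} (hr : e + r < N) :
    ∃ C : k, C ≠ 0 ∧ X.F ^ r • X.E ^ r • v = C • v := by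
  obtain ⟨C, hC, hF⟩ := exists_pow_smul_eq_smul (k := k) (F := X.F) (x := fun t => X.E ^ t • v)
    (s := 0) (r := r) fun t _ ht => ⟨_, stringCoeff_ne_zero X.isPrimitiveRoot (e := e)
      (by omega) t.succ_pos (by omega) (by omega), h.F_smul_E_pow_succ_smul t⟩
  exact ⟨C, hC, by simpa using hF⟩

lemma E_pow_smul_ne_zero (h : X.IsLowestWeight e τ v) (hv : v ≠ 0) {r : ℕ} (hr : e + r < N) :
    X.E ^ r • v ≠ 0 := fun h0 => by
  obtain ⟨C, hC, hF⟩ := h.exists_F_pow_smul_E_pow_smul_eq hr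
  rw [h0, smul_zero] at hF
  exact smul_ne_zero hC hv hF.symm

lemma exists_smul_eq_aeval_smul (hG : Algebra.adjoin k {X.E, X.F, X.L, X.T} = ⊤)
    (h : X.IsLowestWeight e τ v) (a : A) : ∃ r : k[X], a • v = aeval X.E r • v := by
  refine QFL.exists_smul_eq_aeval_smul hG ?_ a
  rintro Y (rfl | rfl | rfl | rfl) s
  · exact ⟨monomial (s + 1) 1, by rw [aeval_monomial_smul, one_smul, smul_smul, pow_succ']⟩
  · cases s with
    | zero => exact ⟨0, by rw [pow_zero, one_smul, h.F_smul, map_zero, zero_smul]⟩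
    | succ s => exact ⟨monomial s _, by rw [aeval_monomial_smul, h.F_smul_E_pow_succ_smul]⟩
  · exact ⟨monomial s _, by rw [aeval_monomial_smul, L_smul_E_pow_smul h.L_smul]⟩
  · exact ⟨monomial s _, by rw [aeval_monomial_smul, T_smul_E_pow_smul h.T_smul]⟩

end IsLowestWeight

variable (X) in
/-- The left ideal of elements that annihilate the generator of the universal module on a lowest
weight vector of weight `(e, τ)`. -/
def lowestWeightIdeal (e : ℕ) (τ : k) : Ideal A :=
  Ideal.span {X.F, X.L - algebraMap k A (p ^ (e + 1)), X.T - algebraMap k A τ}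

lemma exists_sub_aeval_mem_lowestWeightIdeal
    (hG : Algebra.adjoin k {X.E, X.F, X.L, X.T} = ⊤) (e : ℕ) (τ : k) (a : A) :
    ∃ r : k[X], a - aeval X.E r ∈ X.lowestWeightIdeal e τ := by
  have hmem : ∀ b ∈ ({X.F, X.L - algebraMap k A (p ^ (e + 1)), X.T - algebraMap k A τ} : Set A),
      b ∈ X.lowestWeightIdeal e τ := fun b hb => Ideal.subset_span hb
  have hone : X.IsLowestWeight e τ ((X.lowestWeightIdeal e τ).mkQ 1) := by
    refine ⟨?_, ?_, ?_⟩
    · rw [← map_smul, smul_eq_mul, mul_one]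
      exact (Submodule.Quotient.mk_eq_zero _).2 (hmem _ (by simp))
    · rw [← map_smul, ← algebraMap_smul A (p ^ (e + 1)), ← map_smul, smul_eq_mul, smul_eq_mul,
        mul_one, mul_one]
      exact (Submodule.Quotient.eq _).2 (hmem _ (by simp))
    · rw [← map_smul, ← algebraMap_smul A τ, ← map_smul, smul_eq_mul, smul_eq_mul, mul_one, mul_one]
      exact (Submodule.Quotient.eq _).2 (hmem _ (by simp))
  obtain ⟨r, hr⟩ := hone.exists_smul_eq_aeval_smul hG a
  rw [← map_smul, ← map_smul, smul_eq_mul, smul_eq_mul, mul_one, mul_one] at hr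
  exact ⟨r, (Submodule.Quotient.eq _).1 hr⟩

lemma IsLowestWeight.smul_eq_aeval_smul {e : ℕ} {τ : k} {v : M} (h : X.IsLowestWeight e τ v)
    {a : A} {r : k[X]} (ha : a - aeval X.E r ∈ X.lowestWeightIdeal e τ) :
    a • v = aeval X.E r • v := by
  have hle : X.lowestWeightIdeal e τ ≤ LinearMap.ker (LinearMap.toSpanSingleton A M v) := by
    refine Ideal.span_le.2 ?_
    rintro b (rfl | rfl | rfl)
    · exact h.F_smul
    · exact (sub_smul _ _ v).trans (by rw [h.L_smul, algebraMap_smul, sub_self])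
    · exact (sub_smul _ _ v).trans (by rw [h.T_smul, algebraMap_smul, sub_self])
  simpa [sub_smul, sub_eq_zero] using hle ha

namespace IsSimpleLowestWeight

variable {e : ℕ} {τ : k} {v : M}

lemma aeval_smul_eq_zero_iff (h : X.IsSimpleLowestWeight e τ v) (he : e < N) (r : k[X]) :
    aeval X.E r • v = 0 ↔ Polynomial.X ^ (N - e) ∣ r :=
  QFL.aeval_smul_eq_zero_iff h.E_pow_smul
    (h.toIsLowestWeight.E_pow_smul_ne_zero h.ne_zero (by omega)) r

lemma smul_eq_zero_iff_smul_eq_zero {M' : Type*} [AddCommGroup M'] [Module A M'] [Module k M']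
    [IsScalarTower k A M'] (hG : Algebra.adjoin k {X.E, X.F, X.L, X.T} = ⊤) {v' : M'}
    (h : X.IsSimpleLowestWeight e τ v) (h' : X.IsSimpleLowestWeight e τ v') (he : e < N) (a : A) :
    a • v = 0 ↔ a • v' = 0 := by
  obtain ⟨r, hr⟩ := exists_sub_aeval_mem_lowestWeightIdeal hG e τ a
  rw [h.smul_eq_aeval_smul hr, h'.smul_eq_aeval_smul hr, h.aeval_smul_eq_zero_iff he,
    h'.aeval_smul_eq_zero_iff he]

end IsSimpleLowestWeight

end Sl2Generators

/-! ### Linked strings -/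

section SpanSingleton

variable {A M B N : Type*} [Ring A] [AddCommGroup M] [Module A M] [AddCommGroup B] [Module A B]
  [AddCommGroup N] [Module A N]

open Submodule LinearMap

lemma exists_surjective_ker_eq_comap {π : N →ₗ[A] M} {φ : N →ₗ[A] B} (hφ : Function.Surjective φ)
    {W Q : Submodule A M} (hW : range π = W) (h : ∀ x, π x ∈ Q ↔ φ x = 0) :
    ∃ f : W →ₗ[A] B, Function.Surjective f ∧ ker f = Q.comap W.subtype := by
  subst hW
  have hker : ker π ≤ ker φ := fun x hx => (h x).1 (by rw [mem_ker.1 hx]; exact Q.zero_mem)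
  let f := (ker π).liftQ φ hker ∘ₗ π.quotKerEquivRange.symm.toLinearMap
  have hf : ∀ x, f ⟨π x, mem_range_self π x⟩ = φ x := fun x => by
    have hx : π.quotKerEquivRange.symm ⟨π x, mem_range_self π x⟩ = (ker π).mkQ x := by
      rw [LinearEquiv.symm_apply_eq]
      rfl
    exact congrArg ((ker π).liftQ φ hker) hx
  refine ⟨f, fun b => ?_, ?_⟩
  · obtain ⟨x, rfl⟩ := hφ b
    exact ⟨_, hf x⟩
  · ext ⟨_, x, rfl⟩
    rw [mem_ker, hf, ← h]
    rfl

lemma toSpanSingleton_mk_surjective (w : M) :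
    Function.Surjective (toSpanSingleton A (span A {w}) ⟨w, mem_span_singleton_self w⟩) := by
  rintro ⟨y, hy⟩
  obtain ⟨a, rfl⟩ := mem_span_singleton.1 hy
  exact ⟨a, rfl⟩

lemma toSpanSingleton_mk_eq_zero_iff (w : M) (a : A) :
    toSpanSingleton A (span A {w}) ⟨w, mem_span_singleton_self w⟩ a = 0 ↔ a • w = 0 :=
  Subtype.ext_iff

end SpanSingleton

namespace Sl2Generators

variable {k A M : Type*} [Field k] [Ring A] [Algebra k A]
  [AddCommGroup M] [Module A M] [Module k M] {N : ℕ} {p : k} {X : Sl2Generators A N p}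

variable (X) in
/-- Generators `α`, `γ` of an indecomposable projective: `α` generates the lower string, and `γ`,
which generates the whole module, is linked to that string by `F • γ = E ^ (d - 1) • α`. -/
structure IsLinkedPair (d : ℕ) (τ : k) (α γ : M) : Prop where
  pos : 0 < d
  lt : d < N
  odd : Odd d
  isLowestWeight : X.IsLowestWeight (N - d) (-τ) α
  E_pow_smul_ne_zero : X.E ^ (N - 1) • α ≠ 0
  F_smul : X.F • γ = X.E ^ (d - 1) • α
  L_smul : X.L • γ = p ^ (d + 1) • γ
  T_smul : X.T • γ = τ • γ

lemma IsLinkedPair.alpha_ne_zero {d : ℕ} {τ : k} {α γ : M} (h : X.IsLinkedPair d τ α γ) :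
    α ≠ 0 := fun h0 =>
  h.E_pow_smul_ne_zero (by rw [h0, smul_zero])

lemma IsLinkedPair.tau_ne_zero {d : ℕ} {τ : k} {α γ : M} (h : X.IsLinkedPair d τ α γ) :
    τ ≠ 0 := fun h0 => h.alpha_ne_zero <| by
  have hT : X.T • α = 0 := by rw [h.isLowestWeight.T_smul, h0, neg_zero, zero_smul]
  rw [← one_smul A α, ← X.T_pow, pow_two, mul_smul, hT, smul_zero]

variable [IsScalarTower k A M]

lemma IsLowestWeight.map {M' : Type*} [AddCommGroup M'] [Module A M'] [Module k M']
    [IsScalarTower k A M'] {e : ℕ} {τ : k} {v : M} (h : X.IsLowestWeight e τ v)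
    (f : M →ₗ[A] M') : X.IsLowestWeight e τ (f v) where
  F_smul := by rw [← map_smul, h.F_smul, map_zero]
  L_smul := by rw [← map_smul, h.L_smul, f.map_smul_of_tower]
  T_smul := by rw [← map_smul, h.T_smul, f.map_smul_of_tower]

lemma IsSimpleLowestWeight.E_pow_smul_smul (hG : Algebra.adjoin k {X.E, X.F, X.L, X.T} = ⊤)
    {e : ℕ} {τ : k} {v : M} (h : X.IsSimpleLowestWeight e τ v) (he : 0 < e) (a : A) :
    X.E ^ (N - 1) • a • v = 0 := by
  obtain ⟨r, hr⟩ := h.toIsLowestWeight.exists_smul_eq_aeval_smul hG a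
  rw [hr, pow_smul_aeval_smul, ← Nat.sub_add_cancel (show N - e ≤ N - 1 by omega), pow_add,
    mul_smul, h.E_pow_smul, smul_zero, smul_zero]

namespace IsLinkedPair

open Submodule

variable {d : ℕ} {τ : k} {α γ : M}

lemma isSimpleLowestWeight (h : X.IsLinkedPair d τ α γ) :
    X.IsSimpleLowestWeight d τ (X.E ^ d • α) where
  toIsLowestWeight := by
    simpa [h.odd.neg_one_pow] using
      h.isLowestWeight.E_pow_smul (Nat.sub_add_cancel h.lt.le)
  ne_zero := fun h0 => h.E_pow_smul_ne_zero <| by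
    have := h.lt
    rw [show N - 1 = N - 1 - d + d by omega, pow_add, mul_smul, h0, smul_zero]
  E_pow_smul := by
    rw [smul_smul, ← pow_add, E_pow_smul_of_le (by omega)]

lemma F_smul_E_pow_succ_smul (h : X.IsLinkedPair d τ α γ) (s : ℕ) :
    X.F • X.E ^ (s + 1) • γ =
      p ^ (s + 1) • X.E ^ (s + d) • α + stringCoeff p d (s + 1) • X.E ^ s • γ := by
  have := h.pos
  rw [Sl2Generators.F_smul_E_pow_succ_smul h.L_smul, h.F_smul, smul_smul (X.E ^ (s + 1)),
    ← pow_add, show s + 1 + (d - 1) = s + d by omega]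

lemma exists_F_pow_smul_E_pow_smul_eq (h : X.IsLinkedPair d τ α γ) :
    ∃ C : k, C ≠ 0 ∧ X.F ^ (d - 1) • X.E ^ (N - 1) • γ = C • X.E ^ (N - d) • γ := by
  have := h.pos
  have := h.lt
  obtain ⟨C, hC, hF⟩ := exists_pow_smul_eq_smul (k := k) (F := X.F) (x := fun t => X.E ^ t • γ)
    (s := N - d) (r := d - 1) fun t hs ht => ⟨_, stringCoeff_ne_zero X.isPrimitiveRoot h.lt
      t.succ_pos (by omega) (by omega), by
      rw [h.F_smul_E_pow_succ_smul, E_pow_smul_of_le (by omega), smul_zero, zero_add]⟩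
  rw [show N - d + (d - 1) = N - 1 by omega] at hF
  exact ⟨C, hC, hF⟩

lemma F_smul_E_pow_sub_smul (h : X.IsLinkedPair d τ α γ) :
    X.F • X.E ^ (N - d) • γ = p ^ (N - d) • X.E ^ (N - 1) • α := by
  have := h.pos
  have := h.lt
  rw [show N - d = N - d - 1 + 1 by omega, h.F_smul_E_pow_succ_smul,
    stringCoeff_eq_zero X.isPrimitiveRoot (by rw [show d + (N - d - 1 + 1) = N by omega]),
    zero_smul, add_zero, show N - d - 1 + d = N - 1 by omega]

lemma exists_F_pow_smul_E_pow_smul_eq_smul_alpha (h : X.IsLinkedPair d τ α γ) :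
    ∃ C : k, C ≠ 0 ∧ X.F ^ d • X.E ^ (N - 1) • γ = C • X.E ^ (N - 1) • α := by
  obtain ⟨C, hC, hF⟩ := h.exists_F_pow_smul_E_pow_smul_eq
  refine ⟨C * p ^ (N - d), mul_ne_zero hC (pow_ne_zero _ X.p_ne_zero), ?_⟩
  rw [← Nat.sub_add_cancel (Nat.one_le_of_lt h.pos), pow_succ', mul_smul, hF, smul_comm,
    Nat.sub_add_cancel (Nat.one_le_of_lt h.pos), h.F_smul_E_pow_sub_smul, smul_smul]

lemma E_pow_smul_gamma_ne_zero (h : X.IsLinkedPair d τ α γ) : X.E ^ (N - 1) • γ ≠ 0 := fun h0 => by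
  obtain ⟨C, hC, hF⟩ := h.exists_F_pow_smul_E_pow_smul_eq_smul_alpha
  rw [h0, smul_zero] at hF
  exact smul_ne_zero hC h.E_pow_smul_ne_zero hF.symm

lemma T_smul_E_pow_smul_alpha (h : X.IsLinkedPair d τ α γ) :
    X.T • X.E ^ (N - 1) • α = τ • X.E ^ (N - 1) • α := by
  have hodd : Odd (N - 1) := Nat.Even.sub_odd X.pos X.even odd_one
  rw [T_smul_E_pow_smul h.isLowestWeight.T_smul, hodd.neg_one_pow, neg_mul_neg, one_mul]

lemma T_smul_E_pow_smul_gamma (h : X.IsLinkedPair d τ α γ) :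
    X.T • X.E ^ (N - 1) • γ = (-τ) • X.E ^ (N - 1) • γ := by
  have hodd : Odd (N - 1) := Nat.Even.sub_odd X.pos X.even odd_one
  rw [T_smul_E_pow_smul h.T_smul, hodd.neg_one_pow, neg_one_mul]

end IsLinkedPair
end Sl2Generators

section Kernel
variable {k A M : Type*} [Field k] [Ring A] [Algebra k A] [AddCommGroup M] [Module A M]
  [Module k M] [IsScalarTower k A M] {E : A} {v : M}

lemma X_pow_dvd_of_smul_aeval_smul_eq_zero {n : ℕ} (hn : 0 < n) (hv : E ^ n • v = 0)
    (hne : E ^ (n - 1) • v ≠ 0) {r : k[X]} (hr : E • aeval E r • v = 0) :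
    Polynomial.X ^ (n - 1) ∣ r := by
  have hdvd : Polynomial.X ^ n ∣ Polynomial.X * r := by
    rw [← aeval_smul_eq_zero_iff hv hne, map_mul, aeval_X, mul_smul, hr]
  rw [← Nat.sub_add_cancel hn, pow_succ'] at hdvd
  exact (mul_dvd_mul_iff_left X_ne_zero).1 hdvd

lemma exists_aeval_smul_eq_smul {n : ℕ} (hn : 0 < n) (hv : E ^ n • v = 0) {r : k[X]}
    (hr : Polynomial.X ^ (n - 1) ∣ r) : ∃ c : k, aeval E r • v = c • E ^ (n - 1) • v := by
  obtain ⟨s, rfl⟩ := hr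
  have h := pow_smul_aeval_X_pow_mul_smul (Nat.sub_lt hn one_pos) hv s
  rw [Nat.sub_self, pow_zero, one_smul] at h
  exact ⟨_, h⟩

lemma exists_aeval_smul_eq_smul_of_smul_eq_zero {n : ℕ} (hn : 0 < n) (hv : E ^ n • v = 0)
    (hne : E ^ (n - 1) • v ≠ 0) {r : k[X]} (hr : E • aeval E r • v = 0) :
    ∃ c : k, aeval E r • v = c • E ^ (n - 1) • v :=
  exists_aeval_smul_eq_smul hn hv (X_pow_dvd_of_smul_aeval_smul_eq_zero hn hv hne hr)

end Kernel

namespace Sl2Generators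

variable {k A M : Type*} [Field k] [Ring A] [Algebra k A]
  [AddCommGroup M] [Module A M] [Module k M] [IsScalarTower k A M] {N : ℕ} {p : k}
  {X : Sl2Generators A N p}

namespace IsLinkedPair

open Submodule

variable {d : ℕ} {τ : k} {α γ : M}

lemma E_pow_smul_alpha_mem_iff (h : X.IsLinkedPair d τ α γ) {W : Submodule A M} :
    X.E ^ (N - 1) • α ∈ W ↔ span A {X.E ^ d • α} ≤ W := by
  have := h.lt
  have hE : X.E ^ (N - 1) • α = X.E ^ (N - 1 - d) • X.E ^ d • α := by
    rw [smul_smul, ← pow_add, show N - 1 - d + d = N - 1 by omega]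
  rw [span_singleton_le_iff_mem, hE]
  refine ⟨fun hW => ?_, fun hW => W.smul_mem _ hW⟩
  obtain ⟨C, hC, hF⟩ :=
    h.isSimpleLowestWeight.exists_F_pow_smul_E_pow_smul_eq (r := N - 1 - d) (by omega)
  have hCW := W.smul_mem (X.F ^ (N - 1 - d)) hW
  rw [hF] at hCW
  exact (W.smul_mem_iff hC).1 hCW

lemma span_E_pow_smul_le_of_E_pow_smul_gamma_mem (h : X.IsLinkedPair d τ α γ) {W : Submodule A M}
    (hW : X.E ^ (N - 1) • γ ∈ W) : span A {X.E ^ d • α} ≤ W := by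
  obtain ⟨C, hC, hF⟩ := h.exists_F_pow_smul_E_pow_smul_eq_smul_alpha
  have hCW := W.smul_mem (X.F ^ d) hW
  rw [hF] at hCW
  exact h.E_pow_smul_alpha_mem_iff.1 ((W.smul_mem_iff hC).1 hCW)

lemma alpha_notMem (hG : Algebra.adjoin k {X.E, X.F, X.L, X.T} = ⊤)
    (h : X.IsLinkedPair d τ α γ) : α ∉ span A {X.E ^ d • α} := fun hα => by
  obtain ⟨a, ha⟩ := mem_span_singleton.1 hα
  refine h.E_pow_smul_ne_zero ?_
  rw [← ha, h.isSimpleLowestWeight.E_pow_smul_smul hG h.pos a]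

lemma E_pow_smul_gamma_notMem (hG : Algebra.adjoin k {X.E, X.F, X.L, X.T} = ⊤)
    (h : X.IsLinkedPair d τ α γ) : X.E ^ (N - 1) • γ ∉ span A {α} := fun hγ => by
  obtain ⟨a, ha⟩ := mem_span_singleton.1 hγ
  obtain ⟨r, hr⟩ := h.isLowestWeight.exists_smul_eq_aeval_smul hG a
  obtain ⟨c, hc⟩ := exists_aeval_smul_eq_smul_of_smul_eq_zero X.pos (E_pow_smul_of_le le_rfl α)
    h.E_pow_smul_ne_zero (r := r) (by
      rw [← hr, ha, smul_smul, ← pow_succ', E_pow_smul_of_le (by omega)])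
  have hT := h.T_smul_E_pow_smul_gamma
  rw [← ha, hr, hc, smul_comm, h.T_smul_E_pow_smul_alpha, ← sub_eq_zero] at hT
  have hzero : (2 * τ) • c • X.E ^ (N - 1) • α = 0 := by
    rw [← hT]
    generalize X.E ^ (N - 1) • α = x
    module
  rw [← hc, ← hr, ha, smul_eq_zero_iff_right (mul_ne_zero X.two_ne_zero h.tau_ne_zero)] at hzero
  exact h.E_pow_smul_gamma_ne_zero hzero

lemma E_pow_sub_smul_gamma_notMem (hG : Algebra.adjoin k {X.E, X.F, X.L, X.T} = ⊤)
    (h : X.IsLinkedPair d τ α γ) : X.E ^ (N - d) • γ ∉ span A {α} := fun hγ => by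
  have := h.pos
  have := h.lt
  refine h.E_pow_smul_gamma_notMem hG ?_
  rw [show N - 1 = d - 1 + (N - d) by omega, pow_add, mul_smul]
  exact smul_mem _ _ hγ

lemma isLowestWeight_mkQ_E_pow_sub_smul (h : X.IsLinkedPair d τ α γ) {W : Submodule A M}
    (hW : span A {X.E ^ d • α} ≤ W) :
    X.IsLowestWeight (N - d) (-τ) (W.mkQ (X.E ^ (N - d) • γ)) where
  F_smul := by
    rw [← map_smul, h.F_smul_E_pow_sub_smul, W.mkQ.map_smul_of_tower]
    exact smul_eq_zero_of_right _
      ((Quotient.mk_eq_zero W).2 (h.E_pow_smul_alpha_mem_iff.2 hW))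
  L_smul := by
    have := h.lt
    rw [← map_smul, L_smul_E_pow_smul h.L_smul, W.mkQ.map_smul_of_tower,
      ← X.pow_add_card (N - d + 1), show d + 1 + 2 * (N - d) = N - d + 1 + N by omega]
  T_smul := by
    have hodd : Odd (N - d) := Nat.Even.sub_odd h.lt.le X.even h.odd
    rw [← map_smul, T_smul_E_pow_smul h.T_smul, W.mkQ.map_smul_of_tower, hodd.neg_one_pow,
      neg_one_mul]

lemma isSimpleLowestWeight_mkQ_E_pow_sub_smul (h : X.IsLinkedPair d τ α γ) {W : Submodule A M}
    (hW : span A {X.E ^ d • α} ≤ W) (hγ : X.E ^ (N - d) • γ ∉ W) :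
    X.IsSimpleLowestWeight (N - d) (-τ) (W.mkQ (X.E ^ (N - d) • γ)) where
  toIsLowestWeight := h.isLowestWeight_mkQ_E_pow_sub_smul hW
  ne_zero := fun h0 => hγ ((Quotient.mk_eq_zero W).1 h0)
  E_pow_smul := by
    have := h.lt
    rw [← map_smul, smul_smul, ← pow_add, E_pow_smul_of_le (by omega), map_zero]

lemma isSimpleLowestWeight_mkQ_alpha (hG : Algebra.adjoin k {X.E, X.F, X.L, X.T} = ⊤)
    (h : X.IsLinkedPair d τ α γ) :
    X.IsSimpleLowestWeight (N - d) (-τ) ((span A {X.E ^ d • α}).mkQ α) where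
  toIsLowestWeight := h.isLowestWeight.map _
  ne_zero := fun h0 => h.alpha_notMem hG ((Quotient.mk_eq_zero _).1 h0)
  E_pow_smul := by
    rw [Nat.sub_sub_self h.lt.le, ← map_smul]
    exact (Quotient.mk_eq_zero _).2 (mem_span_singleton_self _)

lemma isLowestWeight_mkQ_gamma (h : X.IsLinkedPair d τ α γ) {W : Submodule A M} (hα : α ∈ W) :
    X.IsLowestWeight d τ (W.mkQ γ) where
  F_smul := by
    rw [← map_smul, h.F_smul]
    exact (Quotient.mk_eq_zero _).2 (smul_mem _ _ hα)
  L_smul := by rw [← map_smul, h.L_smul, LinearMap.map_smul_of_tower]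
  T_smul := by rw [← map_smul, h.T_smul, LinearMap.map_smul_of_tower]

end IsLinkedPair
end Sl2Generators

namespace Sl2Generators

variable {k A M : Type*} [Field k] [Ring A] [Algebra k A]
  [AddCommGroup M] [Module A M] {N : ℕ} {p : k} {X : Sl2Generators A N p}

variable (X) in
/-- The radical of the module generated by `γ`, for a linked pair `(α, γ)` of parameter `d`. -/
def pairRadical (d : ℕ) (α γ : M) : Submodule A M :=
  Submodule.span A {α} ⊔ Submodule.span A {X.E ^ (N - d) • γ}

namespace IsLinkedPair

open Submodule

variable [Module k M] [IsScalarTower k A M] {d : ℕ} {τ : k} {α γ : M}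

lemma gamma_notMem_pairRadical (hG : Algebra.adjoin k {X.E, X.F, X.L, X.T} = ⊤)
    (h : X.IsLinkedPair d τ α γ) : γ ∉ X.pairRadical d α γ := fun hγ => by
  obtain ⟨y, hy, z, hz, hyz⟩ := mem_sup.1 hγ
  obtain ⟨a, rfl⟩ := mem_span_singleton.1 hz
  have hsimple := h.isSimpleLowestWeight_mkQ_E_pow_sub_smul (span_singleton_smul_le A _ α)
    (h.E_pow_sub_smul_gamma_notMem hG)
  have hkill := hsimple.E_pow_smul_smul hG (Nat.sub_pos_of_lt h.lt) a
  rw [← map_smul, ← map_smul] at hkill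
  refine h.E_pow_smul_gamma_notMem hG ?_
  rw [← hyz, smul_add]
  exact add_mem (smul_mem _ _ hy) ((Quotient.mk_eq_zero _).1 hkill)

lemma isSimpleLowestWeight_mkQ_gamma (hG : Algebra.adjoin k {X.E, X.F, X.L, X.T} = ⊤)
    (h : X.IsLinkedPair d τ α γ) :
    X.IsSimpleLowestWeight d τ ((X.pairRadical d α γ).mkQ γ) where
  toIsLowestWeight := h.isLowestWeight_mkQ_gamma
    (le_sup_left (a := span A {α}) (mem_span_singleton_self α))
  ne_zero := fun h0 => h.gamma_notMem_pairRadical hG ((Quotient.mk_eq_zero _).1 h0)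
  E_pow_smul := by
    rw [← map_smul]
    exact (Quotient.mk_eq_zero _).2
      (le_sup_right (a := span A {α}) (mem_span_singleton_self _))

/-- Both `γ` modulo the radical and `E ^ d • α` are simple lowest weight vectors of the same
weight, so they have the same annihilator. -/
lemma smul_gamma_mem_pairRadical_iff (hG : Algebra.adjoin k {X.E, X.F, X.L, X.T} = ⊤)
    (h : X.IsLinkedPair d τ α γ) (a : A) :
    a • γ ∈ X.pairRadical d α γ ↔ a • X.E ^ d • α = 0 := by
  rw [← Quotient.mk_eq_zero]
  exact (h.isSimpleLowestWeight_mkQ_gamma hG).smul_eq_zero_iff_smul_eq_zero hG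
    h.isSimpleLowestWeight h.lt a

lemma exists_linearMap_span_gamma (hG : Algebra.adjoin k {X.E, X.F, X.L, X.T} = ⊤)
    (h : X.IsLinkedPair d τ α γ) :
    ∃ f : span A {γ} →ₗ[A] span A {X.E ^ d • α}, Function.Surjective f ∧
      LinearMap.ker f = (X.pairRadical d α γ).comap (span A {γ}).subtype :=
  exists_surjective_ker_eq_comap (toSpanSingleton_mk_surjective _)
    (LinearMap.span_singleton_eq_range A M γ).symm fun a => by
      rw [toSpanSingleton_mk_eq_zero_iff, ← h.smul_gamma_mem_pairRadical_iff hG]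
      rfl

lemma smul_add_smul_mem_iff (hG : Algebra.adjoin k {X.E, X.F, X.L, X.T} = ⊤)
    (h : X.IsLinkedPair d τ α γ) {M' : Type*} [AddCommGroup M'] [Module A M'] [Module k M']
    [IsScalarTower k A M'] {w : M'} (hw : X.IsSimpleLowestWeight (N - d) (-τ) w) (a b : A) :
    a • α + b • X.E ^ (N - d) • γ ∈ span A {X.E ^ d • α} ↔ a • w = 0 ∧ b • w = 0 := by
  have hlt : N - d < N := Nat.sub_lt X.pos h.pos
  have hle : span A {X.E ^ d • α} ≤ span A {α} := span_singleton_smul_le A _ α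
  have hγ := h.E_pow_sub_smul_gamma_notMem hG
  have hα_iff : a • α ∈ span A {X.E ^ d • α} ↔ a • w = 0 := by
    rw [← Quotient.mk_eq_zero]
    exact (h.isSimpleLowestWeight_mkQ_alpha hG).smul_eq_zero_iff_smul_eq_zero hG hw hlt a
  have hγ_iff : ∀ W, span A {X.E ^ d • α} ≤ W → X.E ^ (N - d) • γ ∉ W →
      (b • X.E ^ (N - d) • γ ∈ W ↔ b • w = 0) := fun W hW hγW => by
    rw [← Quotient.mk_eq_zero]
    exact (h.isSimpleLowestWeight_mkQ_E_pow_sub_smul hW hγW).smul_eq_zero_iff_smul_eq_zero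
      hG hw hlt b
  constructor
  · intro hmem
    have hb : b • w = 0 := (hγ_iff _ hle hγ).1 <|
      ((span A {α}).add_mem_iff_right (smul_mem _ a (mem_span_singleton_self α))).1 (hle hmem)
    have hbmem := (hγ_iff _ le_rfl fun hS => hγ (hle hS)).2 hb
    exact ⟨hα_iff.1 ((add_mem_cancel_right hbmem).1 hmem), hb⟩
  · rintro ⟨ha, hb⟩
    exact add_mem (hα_iff.2 ha) ((hγ_iff _ le_rfl fun hS => hγ (hle hS)).2 hb)

lemma exists_linearMap_pairRadical (hG : Algebra.adjoin k {X.E, X.F, X.L, X.T} = ⊤)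
    (h : X.IsLinkedPair d τ α γ) {M' : Type*} [AddCommGroup M'] [Module A M'] [Module k M']
    [IsScalarTower k A M'] {w : M'} (hw : X.IsSimpleLowestWeight (N - d) (-τ) w) :
    ∃ f : X.pairRadical d α γ →ₗ[A] span A {w} × span A {w}, Function.Surjective f ∧
      LinearMap.ker f = (span A {X.E ^ d • α}).comap (X.pairRadical d α γ).subtype := by
  let φ := LinearMap.toSpanSingleton A (span A {w}) ⟨w, mem_span_singleton_self w⟩
  have hφ : Function.Surjective (φ.prodMap φ) :=
    (toSpanSingleton_mk_surjective w).prodMap (toSpanSingleton_mk_surjective w)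
  refine exists_surjective_ker_eq_comap (π := (LinearMap.toSpanSingleton A M α).coprod
    (LinearMap.toSpanSingleton A M (X.E ^ (N - d) • γ))) hφ ?_ fun x => ?_
  · rw [LinearMap.range_coprod, ← LinearMap.span_singleton_eq_range,
      ← LinearMap.span_singleton_eq_range, pairRadical]
  · simp only [φ, LinearMap.prodMap_apply, Prod.mk_eq_zero, toSpanSingleton_mk_eq_zero_iff]
    exact h.smul_add_smul_mem_iff hG hw x.1 x.2

end IsLinkedPair
end Sl2Generators

/-! ### Socle and radical layers -/

section Jacobson

variable {A M B : Type*} [Ring A] [AddCommGroup M] [Module A M] [AddCommGroup B] [Module A B]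

lemma jacobson_smul_le_of_ker_eq_comap {W Q : Submodule A M} {f : W →ₗ[A] B}
    (hB : Ring.jacobson A ≤ Module.annihilator A B) (hf : LinearMap.ker f = Q.comap W.subtype) :
    Ring.jacobson A • W ≤ Q :=
  Submodule.smul_le.2 fun a ha x hx => by
    suffices a • (⟨x, hx⟩ : W) ∈ LinearMap.ker f by rwa [hf] at this
    rw [LinearMap.mem_ker, map_smul, Module.mem_annihilator.1 (hB ha)]

lemma mem_jacobson_of_forall_smul_eq_zero {a : A}
    (h : ∀ I : Ideal A, I.IsMaximal → ∀ x : A ⧸ I, a • x = 0) : a ∈ Ring.jacobson A := by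
  rw [Ring.jacobson_eq_sInf_isMaximal]
  refine Submodule.mem_sInf.2 fun I hI => (Submodule.Quotient.mk_eq_zero I).1 ?_
  simpa [← Submodule.Quotient.mk_smul] using h I hI (Submodule.Quotient.mk 1)

end Jacobson

namespace Sl2Generators

open Submodule

variable {k A M : Type*} [Field k] [Ring A] [Algebra k A] [AddCommGroup M] [Module A M]
  [Module k M] [IsScalarTower k A M] {N : ℕ} {p : k} {X : Sl2Generators A N p}

lemma IsSimpleLowestWeight.mem_of_mem_span (hG : Algebra.adjoin k {X.E, X.F, X.L, X.T} = ⊤)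
    {e : ℕ} {τ : k} {v : M} (h : X.IsSimpleLowestWeight e τ v) (he : e < N) {x : M} (hx : x ≠ 0)
    (hxv : x ∈ span A {v}) {W : Submodule A M} (hxW : x ∈ W) : v ∈ W := by
  obtain ⟨t, ht, hEt⟩ := exists_pow_smul_ne_zero X.E_pow hx
  obtain ⟨a, rfl⟩ := mem_span_singleton.1 hxv
  obtain ⟨r, hr⟩ := h.toIsLowestWeight.exists_smul_eq_aeval_smul hG (X.E ^ t * a)
  rw [mul_smul] at hr
  obtain ⟨c, hc⟩ := exists_aeval_smul_eq_smul_of_smul_eq_zero (Nat.sub_pos_of_lt he) h.E_pow_smul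
    (h.toIsLowestWeight.E_pow_smul_ne_zero h.ne_zero (by omega)) (hr ▸ hEt)
  have hc0 : c ≠ 0 := fun h0 => ht (by rw [hr, hc, h0, zero_smul])
  obtain ⟨C, hC, hF⟩ := h.exists_F_pow_smul_E_pow_smul_eq (r := N - e - 1) (by omega)
  have hmem := W.smul_mem (X.F ^ (N - e - 1)) (W.smul_mem (X.E ^ t) hxW)
  rw [hr, hc, smul_comm, hF, smul_smul] at hmem
  exact (W.smul_mem_iff (mul_ne_zero hc0 hC)).1 hmem

lemma IsSimpleLowestWeight.isSimpleModule (hG : Algebra.adjoin k {X.E, X.F, X.L, X.T} = ⊤)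
    {e : ℕ} {τ : k} {v : M} (h : X.IsSimpleLowestWeight e τ v) (he : e < N) :
    IsSimpleModule A (span A {v}) := by
  refine isSimpleModule_iff_isAtom.2 ⟨span_singleton_eq_bot.not.2 h.ne_zero, fun W hW => ?_⟩
  by_contra hW0
  obtain ⟨x, hxW, hx⟩ := W.exists_mem_ne_zero_of_ne_bot hW0
  exact hW.not_ge ((span_singleton_le_iff_mem _ _).2 (h.mem_of_mem_span hG he hx (hW.le hxW) hxW))

namespace IsLinkedPair

variable {d : ℕ} {τ : k} {α γ : M}

lemma alpha_mem_span_gamma (h : X.IsLinkedPair d τ α γ) : α ∈ span A {γ} := by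
  have := h.pos
  have := h.lt
  obtain ⟨C, hC, hF⟩ := h.isLowestWeight.exists_F_pow_smul_E_pow_smul_eq (r := d - 1) (by omega)
  rw [← h.F_smul] at hF
  have hmem := smul_mem _ (X.F ^ (d - 1)) (smul_mem _ X.F (mem_span_singleton_self (R := A) γ))
  rw [hF] at hmem
  exact (smul_mem_iff _ hC).1 hmem

lemma exists_smul_gamma_eq (hG : Algebra.adjoin k {X.E, X.F, X.L, X.T} = ⊤)
    (h : X.IsLinkedPair d τ α γ) (a : A) :
    ∃ r s : k[X], a • γ = aeval X.E r • α + aeval X.E s • γ := by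
  obtain ⟨s, hs⟩ := (h.isLowestWeight_mkQ_gamma
    (mem_span_singleton_self (R := A) α)).exists_smul_eq_aeval_smul hG a
  rw [← map_smul, ← map_smul] at hs
  obtain ⟨b, hb⟩ := mem_span_singleton.1 ((Submodule.Quotient.eq _).1 hs)
  obtain ⟨r, hr⟩ := h.isLowestWeight.exists_smul_eq_aeval_smul hG b
  exact ⟨r, s, by rw [← hr, hb, sub_add_cancel]⟩

lemma exists_eq_smul_add_smul_of_E_smul_eq_zero
    (hG : Algebra.adjoin k {X.E, X.F, X.L, X.T} = ⊤) (h : X.IsLinkedPair d τ α γ) {y : M}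
    (hy : y ∈ span A {γ}) (hEy : X.E • y = 0) :
    ∃ b c : k, y = b • X.E ^ (N - 1) • α + c • X.E ^ (N - 1) • γ := by
  obtain ⟨a, rfl⟩ := mem_span_singleton.1 hy
  obtain ⟨r, s, hrs⟩ := h.exists_smul_gamma_eq hG a
  have hs : Polynomial.X ^ (N - 1) ∣ s := by
    refine X_pow_dvd_of_smul_aeval_smul_eq_zero (v := (span A {α}).mkQ γ) (E := X.E) X.pos
      (E_pow_smul_of_le le_rfl _) ?_ ?_
    · rw [← map_smul]
      exact fun h0 => h.E_pow_smul_gamma_notMem hG ((Quotient.mk_eq_zero _).1 h0)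
    · have hα : (span A {α}).mkQ (aeval X.E r • α) = 0 :=
        (Quotient.mk_eq_zero _).2 (smul_mem _ _ (mem_span_singleton_self α))
      have hmk := congrArg (span A {α}).mkQ hEy
      rwa [map_zero, map_smul, hrs, map_add, hα, zero_add, map_smul] at hmk
  obtain ⟨c, hc⟩ := exists_aeval_smul_eq_smul (E := X.E) X.pos (E_pow_smul_of_le le_rfl γ) hs
  have hEγ : X.E • c • X.E ^ (N - 1) • γ = 0 := by
    rw [smul_comm X.E c, smul_smul X.E, ← pow_succ', E_pow_smul_of_le (by omega), smul_zero]
  rw [hrs, hc, smul_add, hEγ, add_zero] at hEy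
  obtain ⟨b, hb⟩ := exists_aeval_smul_eq_smul_of_smul_eq_zero X.pos (E_pow_smul_of_le le_rfl α)
    h.E_pow_smul_ne_zero hEy
  exact ⟨b, c, by rw [hrs, hb, hc]⟩

/-- `T` separates the tops `E ^ (N - 1) • α` and `E ^ (N - 1) • γ` of the two strings. -/
lemma span_le_of_E_smul_eq_zero (hG : Algebra.adjoin k {X.E, X.F, X.L, X.T} = ⊤)
    (h : X.IsLinkedPair d τ α γ) {y : M} (hy : y ≠ 0) (hyγ : y ∈ span A {γ}) (hEy : X.E • y = 0)
    {W : Submodule A M} (hyW : y ∈ W) : span A {X.E ^ d • α} ≤ W := by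
  obtain ⟨b, c, rfl⟩ := h.exists_eq_smul_add_smul_of_E_smul_eq_zero hG hyγ hEy
  rcases eq_or_ne c 0 with rfl | hc
  · rw [zero_smul, add_zero] at hy hyW
    exact h.E_pow_smul_alpha_mem_iff.1 ((W.smul_mem_iff (left_ne_zero_of_smul hy)).1 hyW)
  · refine h.span_E_pow_smul_le_of_E_pow_smul_gamma_mem ((W.smul_mem_iff
      (mul_ne_zero (mul_ne_zero X.two_ne_zero h.tau_ne_zero) hc)).1 ?_)
    have hdiff := sub_mem (W.smul_of_tower_mem τ hyW) (W.smul_mem X.T hyW)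
    rw [smul_add X.T, smul_comm X.T b, smul_comm X.T c, h.T_smul_E_pow_smul_alpha,
      h.T_smul_E_pow_smul_gamma] at hdiff
    convert hdiff using 1
    generalize X.E ^ (N - 1) • α = x
    generalize X.E ^ (N - 1) • γ = z
    module

lemma span_le_of_mem (hG : Algebra.adjoin k {X.E, X.F, X.L, X.T} = ⊤)
    (h : X.IsLinkedPair d τ α γ) {x : M} (hx : x ≠ 0) (hxγ : x ∈ span A {γ})
    {W : Submodule A M} (hxW : x ∈ W) : span A {X.E ^ d • α} ≤ W := by
  obtain ⟨t, ht, hEt⟩ := exists_pow_smul_ne_zero X.E_pow hx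
  exact h.span_le_of_E_smul_eq_zero hG ht (smul_mem _ _ hxγ) hEt (W.smul_mem _ hxW)

lemma isSimpleModule_span (hG : Algebra.adjoin k {X.E, X.F, X.L, X.T} = ⊤)
    (h : X.IsLinkedPair d τ α γ) : IsSimpleModule A (span A {X.E ^ d • α}) :=
  h.isSimpleLowestWeight.isSimpleModule hG h.lt

lemma sSup_isSimpleModule_eq (hG : Algebra.adjoin k {X.E, X.F, X.L, X.T} = ⊤)
    (h : X.IsLinkedPair d τ α γ) :
    sSup {W | W ≤ span A {γ} ∧ IsSimpleModule A W} = span A {X.E ^ d • α} := by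
  have hatom := isSimpleModule_iff_isAtom.1 (h.isSimpleModule_span hG)
  refine le_antisymm (sSup_le fun W ⟨hWγ, hW⟩ => ?_) (le_sSup ⟨?_, h.isSimpleModule_span hG⟩)
  · obtain ⟨x, hxW, hx⟩ := W.exists_mem_ne_zero_of_ne_bot (isSimpleModule_iff_isAtom.1 hW).1
    exact ((isSimpleModule_iff_isAtom.1 hW).le_iff_eq hatom.1).1
      (h.span_le_of_mem hG hx (hWγ hxW) hxW) |>.ge
  · exact (span_singleton_le_iff_mem _ _).2 (smul_mem _ _ h.alpha_mem_span_gamma)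

lemma exists_F_pow_smul_sub_mem (h : X.IsLinkedPair d τ α γ) :
    ∃ C : k, C ≠ 0 ∧
      X.F ^ (N - 1) • X.E ^ (N - 1 - d) • γ - C • α ∈ span A {X.E ^ d • α} := by
  have := h.pos
  have := h.lt
  have hmod : ∀ t, (span A {X.E ^ d • α}).mkQ (X.E ^ (t + d) • α) = 0 := fun t => by
    rw [pow_add, mul_smul]
    exact (Quotient.mk_eq_zero _).2 (smul_mem _ _ (mem_span_singleton_self _))
  obtain ⟨C, hC, hγ⟩ := exists_pow_smul_eq_smul (k := k) (F := X.F)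
    (x := fun t => (span A {X.E ^ d • α}).mkQ (X.E ^ t • γ)) (s := 0) (r := N - 1 - d)
    fun t _ ht => ⟨_, stringCoeff_ne_zero X.isPrimitiveRoot h.lt t.succ_pos (by omega) (by omega),
      by rw [← map_smul, h.F_smul_E_pow_succ_smul, map_add, LinearMap.map_smul_of_tower,
        hmod, smul_zero, zero_add, LinearMap.map_smul_of_tower]⟩
  obtain ⟨C', hC', hα⟩ :=
    h.isLowestWeight.exists_F_pow_smul_E_pow_smul_eq (r := d - 1) (by omega)
  refine ⟨C * C', mul_ne_zero hC hC', (Submodule.Quotient.eq _).1 ?_⟩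
  simp only [zero_add, pow_zero, one_smul, ← map_smul] at hγ
  change mkQ _ _ = mkQ _ _
  rw [show N - 1 = (d - 1) + 1 + (N - 1 - d) by omega, pow_add, pow_succ, mul_smul, mul_smul,
    map_smul, map_smul, show d - 1 + 1 + (N - 1 - d) - d = N - 1 - d by omega, hγ,
    smul_comm X.F C, smul_comm _ C, ← map_smul, ← map_smul, h.F_smul, hα]
  simp only [LinearMap.map_smul_of_tower, smul_smul]

lemma span_le_jacobson_smul (hE : X.E ^ (N - 1) ∈ Ring.jacobson A)
    (h : X.IsLinkedPair d τ α γ) {W : Submodule A M} (hα : α ∈ W) :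
    span A {X.E ^ d • α} ≤ Ring.jacobson A • W :=
  h.E_pow_smul_alpha_mem_iff.1 (smul_mem_smul hE hα)

/-- `α` lies on a path `F ^ (N - 1)` from `E ^ (N - 1 - d) • γ` modulo the socle, and
`E ^ (N - d) • γ` on a path `F ^ (d - 1)` from `E ^ (N - 1) • γ`. -/
lemma pairRadical_le_jacobson_smul
    (hE : X.E ^ (N - 1) ∈ Ring.jacobson A) (hF : X.F ^ (N - 1) ∈ Ring.jacobson A)
    (h : X.IsLinkedPair d τ α γ) :
    X.pairRadical d α γ ≤ Ring.jacobson A • span A {γ} := by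
  have hγ := mem_span_singleton_self (R := A) γ
  refine sup_le ((span_singleton_le_iff_mem _ _).2 ?_) ((span_singleton_le_iff_mem _ _).2 ?_)
  · obtain ⟨C, hC, hmem⟩ := h.exists_F_pow_smul_sub_mem
    rw [← smul_mem_iff _ hC, ← sub_mem_iff_right _ (smul_mem_smul hF (smul_mem _ _ hγ))]
    exact h.span_le_jacobson_smul hE h.alpha_mem_span_gamma hmem
  · obtain ⟨C, hC, hFE⟩ := h.exists_F_pow_smul_E_pow_smul_eq
    rw [← smul_mem_iff _ hC, ← hFE]
    exact smul_mem _ _ (smul_mem_smul hE hγ)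

lemma jacobson_smul_span_gamma (hG : Algebra.adjoin k {X.E, X.F, X.L, X.T} = ⊤)
    (hE : X.E ^ (N - 1) ∈ Ring.jacobson A) (hF : X.F ^ (N - 1) ∈ Ring.jacobson A)
    (h : X.IsLinkedPair d τ α γ) :
    Ring.jacobson A • span A {γ} = X.pairRadical d α γ := by
  obtain ⟨f, _, hf⟩ := h.exists_linearMap_span_gamma hG
  have := h.isSimpleModule_span hG
  exact le_antisymm (jacobson_smul_le_of_ker_eq_comap
    (IsSemisimpleModule.jacobson_le_annihilator A _) hf) (h.pairRadical_le_jacobson_smul hE hF)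

lemma jacobson_smul_pairRadical (hG : Algebra.adjoin k {X.E, X.F, X.L, X.T} = ⊤)
    (hE : X.E ^ (N - 1) ∈ Ring.jacobson A) (h : X.IsLinkedPair d τ α γ) :
    Ring.jacobson A • X.pairRadical d α γ = span A {X.E ^ d • α} := by
  have hsimple := h.isSimpleLowestWeight_mkQ_alpha hG
  have := hsimple.isSimpleModule hG (Nat.sub_lt X.pos h.pos)
  obtain ⟨f, _, hf⟩ := h.exists_linearMap_pairRadical hG hsimple
  refine le_antisymm (jacobson_smul_le_of_ker_eq_comap ?_ hf) (h.span_le_jacobson_smul hE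
    (le_sup_left (a := span A {α}) (mem_span_singleton_self α)))
  rw [Module.annihilator_prod, inf_idem]
  exact IsSemisimpleModule.jacobson_le_annihilator A _

end IsLinkedPair
end Sl2Generators

namespace Sl2Generators

open Submodule

variable {k A M : Type*} [Field k] [Ring A] [Algebra k A] [AddCommGroup M] [Module A M]
  [Module k M] [IsScalarTower k A M] {N : ℕ} {p : k} {X : Sl2Generators A N p}

lemma isPrimitiveRoot_sq (X : Sl2Generators A N p) : IsPrimitiveRoot (p ^ 2) (N / 2) :=
  X.isPrimitiveRoot.pow X.pos (Nat.mul_div_cancel' X.even.two_dvd).symm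

lemma isPrimitiveRoot_neg_one (X : Sl2Generators A N p) : IsPrimitiveRoot (-1 : k) 2 := by
  refine IsPrimitiveRoot.mk_of_lt _ two_pos (by norm_num) fun l h0 h2 => ?_
  obtain rfl : l = 1 := by omega
  rw [pow_one]
  exact fun h => X.two_ne_zero (by linear_combination -h)

variable (X) in
/-- `N` times the idempotent projecting onto the joint eigenspace of `L` for `p ^ (-2 * i)` and of
`T` for `(-1) ^ j`. -/
def weightSum (i j : ℕ) : A :=
  cyclicSum 2 ((-1 : k) ^ j) X.T * cyclicSum (N / 2) ((p ^ 2) ^ i) X.L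

lemma L_mul_weightSum {c i : ℕ} (hc : N ∣ c + 2 * i) (j : ℕ) :
    X.L * X.weightSum i j = p ^ c • X.weightSum i j := by
  have hroot : ((p ^ 2) ^ i) ^ (N / 2) = 1 := by
    rw [← pow_mul, mul_comm, pow_mul, X.isPrimitiveRoot_sq.pow_eq_one, one_pow]
  have hinv : p ^ c * (p ^ 2) ^ i = 1 := by
    rw [← pow_mul, ← pow_add, (X.isPrimitiveRoot.pow_eq_one_iff_dvd _).2 hc]
  rw [weightSum, ← mul_assoc, (commute_cyclicSum X.commute).eq, mul_assoc,
    mul_cyclicSum X.L_pow hroot hinv, mul_smul_comm]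

lemma T_mul_weightSum (i j : ℕ) : X.T * X.weightSum i j = (-1 : k) ^ j • X.weightSum i j := by
  rw [weightSum, ← mul_assoc, mul_cyclicSum (c := (-1) ^ j) X.T_pow, smul_mul_assoc]
  · rw [← pow_mul, mul_comm, pow_mul, neg_one_sq, one_pow]
  · rw [← pow_add, Even.neg_one_pow ⟨j, rfl⟩]

lemma weightSum_mul_L {c i : ℕ} (hc : N ∣ c + 2 * i) (j : ℕ) :
    X.weightSum i j * X.L = p ^ c • X.weightSum i j := by
  rw [← L_mul_weightSum hc, weightSum]
  exact ((commute_cyclicSum X.commute).mul_right (commute_cyclicSum (Commute.refl X.L))).eq.symm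

lemma weightSum_mul_T (i j : ℕ) : X.weightSum i j * X.T = (-1 : k) ^ j • X.weightSum i j := by
  rw [← T_mul_weightSum, weightSum]
  exact ((commute_cyclicSum (Commute.refl X.T)).mul_right
    (commute_cyclicSum X.commute.symm)).eq.symm

lemma F_pow_mul_weightSum (s i j : ℕ) :
    X.F ^ s * X.weightSum i j = X.weightSum (s + i) (s + j) * X.F ^ s := by
  rw [weightSum, weightSum, ← mul_assoc, X.qCommute_F_T.pow_mul_cyclicSum, mul_assoc,
    X.qCommute_F_L.pow_mul_cyclicSum, mul_assoc, pow_add, pow_add]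

lemma exists_weightSum_smul_ne_zero {x : M} (hx : x ≠ 0) :
    ∃ i < N / 2, ∃ j, X.weightSum i j • x ≠ 0 := by
  obtain ⟨i, hi, hne⟩ := exists_cyclicSum_smul_ne_zero X.isPrimitiveRoot_sq X.half_ne_zero hx X.L
  obtain ⟨j, -, hne⟩ := exists_cyclicSum_smul_ne_zero X.isPrimitiveRoot_neg_one
    (by exact_mod_cast X.two_ne_zero) hne X.T
  exact ⟨i, hi, j, by rwa [weightSum, mul_smul]⟩

lemma exists_isLowestWeight (hF : X.F ^ N = 0) {x : M} (hx : x ≠ 0) :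
    ∃ e τ, ∃ v : M, 0 < e ∧ e < N ∧ X.IsLowestWeight e τ v ∧ v ≠ 0 := by
  obtain ⟨t, ht, hFt⟩ := exists_pow_smul_ne_zero hF hx
  obtain ⟨i, hi, j, hne⟩ := exists_weightSum_smul_ne_zero (X := X) ht
  have := Nat.div_mul_cancel X.even.two_dvd
  refine ⟨N - 2 * i - 1, (-1) ^ j, _, by omega, by omega, ⟨?_, ?_, ?_⟩, hne⟩
  · rw [smul_smul, ← pow_one X.F, F_pow_mul_weightSum, pow_one, mul_smul, hFt, smul_zero]
  · rw [smul_smul, L_mul_weightSum (c := N - 2 * i - 1 + 1) ⟨1, by omega⟩, smul_assoc]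
  · rw [smul_smul, T_mul_weightSum, smul_assoc]

lemma exists_isSimpleLowestWeight (hG : Algebra.adjoin k {X.E, X.F, X.L, X.T} = ⊤)
    (hF : X.F ^ N = 0) [IsSimpleModule A M] :
    ∃ e τ, ∃ v : M, 0 < e ∧ X.IsSimpleLowestWeight e τ v := by
  have := IsSimpleModule.nontrivial A M
  obtain ⟨y, hy⟩ := exists_ne (0 : M)
  obtain ⟨e, τ, v, he, heN, h, hv⟩ := exists_isLowestWeight hF hy
  refine ⟨e, τ, v, he, h, hv, by_contra fun hne => hv ?_⟩
  obtain ⟨a, ha⟩ := IsSimpleModule.toSpanSingleton_surjective A hne v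
  obtain ⟨r, hr⟩ := (h.E_pow_smul (s := N - e) (by omega)).exists_smul_eq_aeval_smul hG a
  exact eq_zero_of_eq_aeval_smul_pow_smul ⟨N, X.E_pow⟩ (by omega : N - e ≠ 0) (ha.symm.trans hr)

lemma IsSimpleLowestWeight.F_pow_smul_smul (hG : Algebra.adjoin k {X.E, X.F, X.L, X.T} = ⊤)
    {e : ℕ} {τ : k} {v : M} (h : X.IsSimpleLowestWeight e τ v) (he : 0 < e) (a : A) :
    X.F ^ (N - 1) • a • v = 0 := by
  obtain ⟨r, hr⟩ := h.toIsLowestWeight.exists_smul_eq_aeval_smul hG a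
  rw [hr]
  clear hr
  induction r using Polynomial.induction_on' with
  | add r s hr hs => rw [map_add, add_smul, smul_add, hr, hs, add_zero]
  | monomial m c =>
    rw [aeval_monomial_smul, smul_comm]
    rcases lt_or_ge m (N - 1) with hm | hm
    · rw [h.F_pow_smul_E_pow_smul_of_lt hm, smul_zero]
    · rw [← Nat.sub_add_cancel (show N - e ≤ m by omega), pow_add, mul_smul, h.E_pow_smul,
        smul_zero, smul_zero, smul_zero]

lemma mem_jacobson_of_forall_isSimpleLowestWeight
    (hG : Algebra.adjoin k {X.E, X.F, X.L, X.T} = ⊤) (hF : X.F ^ N = 0) {b : A}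
    (hb : ∀ (I : Ideal A) (e : ℕ) (τ : k) (v : A ⧸ I), 0 < e → X.IsSimpleLowestWeight e τ v →
      ∀ a : A, b • a • v = 0) : b ∈ Ring.jacobson A :=
  mem_jacobson_of_forall_smul_eq_zero fun I hI x => by
    have : IsSimpleModule A (A ⧸ I) := isSimpleModule_iff_isCoatom.2 (Ideal.isMaximal_def.1 hI)
    obtain ⟨e, τ, v, he, h⟩ := exists_isSimpleLowestWeight (M := A ⧸ I) hG hF
    obtain ⟨a, rfl⟩ := IsSimpleModule.toSpanSingleton_surjective A h.ne_zero x
    exact hb I e τ v he h a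

lemma E_pow_mem_jacobson (hG : Algebra.adjoin k {X.E, X.F, X.L, X.T} = ⊤) (hF : X.F ^ N = 0) :
    X.E ^ (N - 1) ∈ Ring.jacobson A :=
  mem_jacobson_of_forall_isSimpleLowestWeight hG hF fun _ _ _ _ he h a => h.E_pow_smul_smul hG he a

lemma F_pow_mem_jacobson (hG : Algebra.adjoin k {X.E, X.F, X.L, X.T} = ⊤) (hF : X.F ^ N = 0) :
    X.F ^ (N - 1) ∈ Ring.jacobson A :=
  mem_jacobson_of_forall_isSimpleLowestWeight hG hF fun _ _ _ _ he h a => h.F_pow_smul_smul hG he a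

lemma F_pow_succ_mul_E (r : ℕ) :
    X.F ^ (r + 1) * X.E = p ^ (r + 1) • (X.E * X.F ^ (r + 1)) +
      X.F ^ r * ((∑ t ∈ Finset.range (r + 1), p ^ t) • 1 -
        (∑ t ∈ Finset.range (r + 1), p⁻¹ ^ t) • X.L) := by
  induction r with
  | zero => simp [X.F_mul_E, add_sub_assoc]
  | succ r ih =>
    have hcomm : ∀ a b : k, (a • 1 - b • X.L) * X.F =
        X.F * (a • 1 - (p⁻¹ ^ 2 * b) • X.L) := fun a b => by
      rw [sub_mul, mul_sub, smul_mul_assoc, smul_mul_assoc, mul_smul_comm, mul_smul_comm, one_mul,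
        mul_one, (X.qCommute_F_L.symm (pow_ne_zero 2 X.p_ne_zero)).eq, smul_smul, mul_comm b,
        inv_pow]
    have hstep : X.F ^ (r + 1 + 1) * X.E =
        p • (X.F ^ (r + 1) * X.E * X.F) + X.F ^ (r + 1) * (1 - X.L) := by
      rw [pow_succ _ (r + 1), mul_assoc, X.F_mul_E, add_sub_assoc, mul_add, mul_smul_comm,
        mul_assoc]
    have hp : p * (p⁻¹ ^ 2 * ∑ t ∈ Finset.range (r + 1), p⁻¹ ^ t) =
        p⁻¹ * ∑ t ∈ Finset.range (r + 1), p⁻¹ ^ t := by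
      field_simp [X.p_ne_zero]
    rw [hstep, ih, add_mul, smul_mul_assoc, mul_assoc X.E, ← pow_succ, mul_assoc (X.F ^ r), hcomm,
      ← mul_assoc, ← pow_succ, geom_sum_succ (n := r + 1), geom_sum_succ (n := r + 1), smul_add,
      smul_smul, ← pow_succ', add_assoc, ← mul_smul_comm p, ← mul_add (X.F ^ (r + 1)), smul_sub,
      smul_smul, smul_smul, hp]
    congr 2
    module

lemma commute_F_pow_E : Commute (X.F ^ N) X.E := by
  have hsum : ∀ ζ : k, IsPrimitiveRoot ζ N → ∑ t ∈ Finset.range N, ζ ^ t = 0 := fun ζ hζ =>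
    hζ.geom_sum_eq_zero X.one_lt
  obtain ⟨r, hr⟩ := Nat.exists_eq_succ_of_ne_zero X.pos.ne'
  have hE := X.F_pow_succ_mul_E r
  rw [← Nat.succ_eq_add_one, ← hr, hsum p X.isPrimitiveRoot, hsum _ X.isPrimitiveRoot.inv,
    X.isPrimitiveRoot.pow_eq_one, zero_smul, zero_smul, sub_zero, mul_zero, add_zero,
    one_smul] at hE
  exact hE

end Sl2Generators

/-! ### A module with two linked strings -/

section LinkedModule

variable {k : Type*} [Field k] {N : ℕ}

/-- The space with basis two strings of length `N`; it carries the representation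
`linkedGenerators`. -/
abbrev LinkedModule (k : Type*) [Field k] (N : ℕ) : Type _ := Bool × Fin N →₀ k

/-- The `s`-th vector of one of the two strings, extended by zero to `N ≤ s`. The string `false`
starts at `α`, the string `true` at `γ`. -/
def stringVec (k : Type*) [Field k] (N : ℕ) (b : Bool) (s : ℕ) : LinkedModule k N :=
  if hs : s < N then Finsupp.single (b, ⟨s, hs⟩) 1 else 0

lemma stringVec_of_lt {b : Bool} {s : ℕ} (hs : s < N) :
    stringVec k N b s = Finsupp.single (b, ⟨s, hs⟩) 1 := dif_pos hs

lemma stringVec_of_le {b : Bool} {s : ℕ} (hs : N ≤ s) : stringVec k N b s = 0 :=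
  dif_neg hs.not_gt

lemma linkedModule_end_ext {f g : Module.End k (LinkedModule k N)}
    (h : ∀ b s, f (stringVec k N b s) = g (stringVec k N b s)) : f = g := by
  refine Finsupp.lhom_ext' fun ⟨b, s⟩ => LinearMap.ext_ring ?_
  simpa [stringVec_of_lt s.2] using h b s

/-- The endomorphism that sends the `s`-th vector of the string `b` to `x b s`. -/
def stringLift (x : Bool → ℕ → LinkedModule k N) : Module.End k (LinkedModule k N) :=
  Finsupp.linearCombination k fun i => x i.1 i.2

lemma stringLift_apply {x : Bool → ℕ → LinkedModule k N} {b : Bool} {s : ℕ}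
    (hx : N ≤ s → x b s = 0) : stringLift x (stringVec k N b s) = x b s := by
  rcases lt_or_ge s N with hs | hs
  · simp [stringLift, stringVec_of_lt hs]
  · rw [stringVec_of_le hs, map_zero, hx hs]

/-- The number `e` such that `L` acts by `p ^ (e + 1)` on the first vector of the string `b`. -/
def stringWeight (N d : ℕ) (b : Bool) : ℕ := bif b then d else N - d

/-- `E` shifts both strings. -/
def linkedE (k : Type*) [Field k] (N : ℕ) : Module.End k (LinkedModule k N) :=
  stringLift fun b s => stringVec k N b (s + 1)

/-- `F` lowers both strings and sends the first vector of the string `true` into the string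
`false`, as in `Sl2Generators.IsLinkedPair`. -/
def linkedF (N : ℕ) (p : k) (d : ℕ) : Module.End k (LinkedModule k N) :=
  stringLift fun b s => stringCoeff p (stringWeight N d b) s • stringVec k N b (s - 1) +
    bif b then p ^ s • stringVec k N false (s + d - 1) else 0

/-- The diagonal endomorphism with eigenvalue `x b s` on the `s`-th vector of the string `b`. -/
def stringDiag (N : ℕ) (x : Bool → ℕ → k) : Module.End k (LinkedModule k N) :=
  stringLift fun b s => x b s • stringVec k N b s

/-- The eigenvalue of `L` on the `s`-th vector of the string `b`. -/
def linkedL (N : ℕ) (p : k) (d : ℕ) (b : Bool) (s : ℕ) : k := p ^ (stringWeight N d b + 1 + 2 * s)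

/-- The eigenvalue of `T` on the `s`-th vector of the string `b`. -/
def linkedT (τ : k) (b : Bool) (s : ℕ) : k := (-1) ^ s * bif b then τ else -τ

variable {p c τ : k} {d : ℕ} {x y : Bool → ℕ → k}

lemma linkedE_apply (b : Bool) (s : ℕ) :
    linkedE k N (stringVec k N b s) = stringVec k N b (s + 1) :=
  stringLift_apply fun hs => stringVec_of_le (by omega)

lemma linkedF_apply (hp : IsPrimitiveRoot p N) (hd : 0 < d) (b : Bool) (s : ℕ) :
    linkedF N p d (stringVec k N b s) =
      stringCoeff p (stringWeight N d b) s • stringVec k N b (s - 1) +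
        bif b then p ^ s • stringVec k N false (s + d - 1) else 0 := by
  refine stringLift_apply (x := fun b s => _) fun hs => ?_
  have hcoeff : stringCoeff p (stringWeight N d b) s • stringVec k N b (s - 1) = 0 := by
    rcases hs.eq_or_lt with rfl | hs
    · simp [stringCoeff, hp.pow_eq_one]
    · rw [stringVec_of_le (by omega), smul_zero]
  rw [hcoeff, stringVec_of_le (by omega), smul_zero, Bool.cond_self, add_zero]

lemma stringDiag_apply (x : Bool → ℕ → k) (b : Bool) (s : ℕ) :
    stringDiag N x (stringVec k N b s) = x b s • stringVec k N b s :=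
  stringLift_apply (x := fun b s => _) fun hs => by rw [stringVec_of_le hs, smul_zero]

lemma linkedE_pow_apply (b : Bool) (r s : ℕ) :
    (linkedE k N ^ r) (stringVec k N b s) = stringVec k N b (s + r) := by
  induction r with
  | zero => rfl
  | succ r ih => rw [pow_succ', Module.End.mul_apply, ih, linkedE_apply, add_assoc]

lemma linkedF_mul_linkedE (hp : IsPrimitiveRoot p N) (hp1 : p ≠ 1) (hd : 0 < d) :
    linkedF N p d * linkedE k N =
      p • (linkedE k N * linkedF N p d) + 1 - stringDiag N (linkedL N p d) := by
  refine linkedModule_end_ext fun b s => ?_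
  have hshift : stringCoeff p (stringWeight N d b) s • stringVec k N b (s - 1 + 1) =
      stringCoeff p (stringWeight N d b) s • stringVec k N b s := by
    cases s with
    | zero => rw [stringCoeff_zero, zero_smul, zero_smul]
    | succ s => rfl
  simp only [Module.End.mul_apply, LinearMap.add_apply, LinearMap.sub_apply, LinearMap.smul_apply,
    Module.End.one_apply, linkedE_apply, linkedF_apply hp hd, stringDiag_apply, linkedL, map_add,
    map_smul, hshift, stringCoeff_succ hp1, Nat.add_sub_cancel]
  cases b
  · simp only [cond_false, map_zero]
    module
  · simp only [cond_true, map_smul, linkedE_apply, show s + 1 + d - 1 = s + d by omega,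
      show s + d - 1 + 1 = s + d by omega]
    module

lemma stringDiag_pow_eq_one {m : ℕ} (hx : ∀ b s, x b s ^ m = 1) : stringDiag N x ^ m = 1 := by
  refine linkedModule_end_ext fun b s => ?_
  have hpow : ∀ r, (stringDiag N x ^ r) (stringVec k N b s) = x b s ^ r • stringVec k N b s := by
    intro r
    induction r with
    | zero => simp
    | succ r ih =>
      rw [pow_succ, Module.End.mul_apply, stringDiag_apply, map_smul, ih, smul_smul, ← pow_succ']
  rw [hpow, hx, one_smul, Module.End.one_apply]

lemma commute_stringDiag (x y : Bool → ℕ → k) : Commute (stringDiag N x) (stringDiag N y) :=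
  linkedModule_end_ext fun b s => by
    simp only [Module.End.mul_apply, stringDiag_apply, map_smul, smul_comm (x b s)]

lemma qCommute_stringDiag_linkedE (hx : ∀ b s, x b (s + 1) = c * x b s) :
    QCommute c (stringDiag N x) (linkedE k N) :=
  linkedModule_end_ext fun b s => by
    rw [Module.End.mul_apply, LinearMap.smul_apply, Module.End.mul_apply, stringDiag_apply,
      map_smul, linkedE_apply, stringDiag_apply, smul_smul, hx]

lemma qCommute_linkedF_stringDiag (hp : IsPrimitiveRoot p N) (hd : 0 < d)
    (hx : ∀ b s, x b (s + 1) = c * x b s) (hx' : ∀ s, x true s = c * x false (s + d - 1)) :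
    QCommute c (linkedF N p d) (stringDiag N x) := by
  refine linkedModule_end_ext fun b s => ?_
  have hshift : x b s • stringCoeff p (stringWeight N d b) s • stringVec k N b (s - 1) =
      c • x b (s - 1) • stringCoeff p (stringWeight N d b) s • stringVec k N b (s - 1) := by
    cases s with
    | zero => simp only [stringCoeff_zero, zero_smul, smul_zero]
    | succ s => rw [smul_smul c, hx, Nat.add_sub_cancel]
  simp only [Module.End.mul_apply, LinearMap.smul_apply, linkedF_apply hp hd, stringDiag_apply,
    map_add, map_smul, smul_add, hshift, smul_comm (stringCoeff _ _ _)]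
  cases b
  · simp only [cond_false, map_zero, smul_zero]
  · simp only [cond_true, map_smul, stringDiag_apply, hx', smul_smul, mul_comm (p ^ s), mul_assoc]

lemma linkedL_succ (b : Bool) (s : ℕ) : linkedL N p d b (s + 1) = p ^ 2 * linkedL N p d b s := by
  rw [linkedL, linkedL, ← pow_add]
  congr 1
  omega

lemma linkedL_true (hp : IsPrimitiveRoot p N) (hd : 0 < d) (hdN : d < N) (s : ℕ) :
    linkedL N p d true s = p ^ 2 * linkedL N p d false (s + d - 1) := by
  simp only [linkedL, stringWeight, cond_true, cond_false]
  rw [← pow_add, show 2 + (N - d + 1 + 2 * (s + d - 1)) = N + (d + 1 + 2 * s) by omega,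
    pow_add _ N, hp.pow_eq_one, one_mul]

lemma linkedL_pow (hp : IsPrimitiveRoot p N) (hN : Even N) (hd : Odd d) (hdN : d < N) (b : Bool)
    (s : ℕ) : linkedL N p d b s ^ (N / 2) = 1 := by
  have heven : Even (stringWeight N d b + 1 + 2 * s) := by
    cases b <;> grind [stringWeight]
  obtain ⟨r, hr⟩ := heven.two_dvd
  rw [linkedL, hr, ← pow_mul, mul_comm 2 r, mul_assoc, Nat.mul_div_cancel' hN.two_dvd, mul_comm,
    pow_mul, hp.pow_eq_one, one_pow]

lemma linkedT_succ (b : Bool) (s : ℕ) : linkedT τ b (s + 1) = -1 * linkedT τ b s := by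
  rw [linkedT, linkedT, pow_succ', mul_assoc]

lemma linkedT_true (hd : Odd d) (s : ℕ) :
    linkedT τ true s = -1 * linkedT τ false (s + d - 1) := by
  obtain ⟨m, rfl⟩ := hd
  simp [linkedT, show s + (2 * m + 1) - 1 = s + 2 * m by omega, pow_add, pow_mul]

lemma linkedT_sq (hτ : τ ^ 2 = 1) (b : Bool) (s : ℕ) : linkedT τ b s ^ 2 = 1 := by
  cases b <;> simp [linkedT, mul_pow, ← pow_mul, mul_comm s, hτ]

/-- The representation of `Sl2Generators` on `LinkedModule` in which the two strings form an
`IsLinkedPair`. -/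
def linkedGenerators (hp : IsPrimitiveRoot p N) (hN : Even N) (hd : Odd d) (hdN : d < N)
    (hτ : τ ^ 2 = 1) : Sl2Generators (Module.End k (LinkedModule k N)) N p where
  E := linkedE k N
  F := linkedF N p d
  L := stringDiag N (linkedL N p d)
  T := stringDiag N (linkedT τ)
  isPrimitiveRoot := hp
  pos := by omega
  even := hN
  L_pow := stringDiag_pow_eq_one (linkedL_pow hp hN hd hdN)
  T_pow := stringDiag_pow_eq_one (linkedT_sq hτ)
  commute := commute_stringDiag _ _
  qCommute_L_E := qCommute_stringDiag_linkedE linkedL_succ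
  qCommute_F_L := qCommute_linkedF_stringDiag hp hd.pos linkedL_succ (linkedL_true hp hd.pos hdN)
  qCommute_T_E := qCommute_stringDiag_linkedE linkedT_succ
  qCommute_F_T := qCommute_linkedF_stringDiag hp hd.pos linkedT_succ (linkedT_true hd)
  E_pow := linkedModule_end_ext fun b s => by
    rw [linkedE_pow_apply, stringVec_of_le (by omega), LinearMap.zero_apply]
  F_mul_E := linkedF_mul_linkedE hp (hp.ne_one (by grind)) hd.pos

lemma isLinkedPair_linkedGenerators (hp : IsPrimitiveRoot p N) (hN : Even N) (hd : Odd d)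
    (hdN : d < N) (hτ : τ ^ 2 = 1) : (linkedGenerators hp hN hd hdN hτ).IsLinkedPair d τ
      (stringVec k N false 0) (stringVec k N true 0) where
  pos := hd.pos
  lt := hdN
  odd := hd
  isLowestWeight :=
    { F_smul := (linkedF_apply hp hd.pos _ _).trans (by simp [stringCoeff_zero])
      L_smul := (stringDiag_apply _ _ _).trans (by simp [linkedL, stringWeight])
      T_smul := (stringDiag_apply _ _ _).trans (by simp [linkedT]) }
  E_pow_smul_ne_zero h := by
    have h0 := (linkedE_pow_apply (k := k) (N := N) false (N - 1) 0).symm.trans h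
    rw [stringVec_of_lt (by omega), Finsupp.single_eq_zero] at h0
    exact one_ne_zero h0
  F_smul := (linkedF_apply hp hd.pos _ _).trans <| by
    refine Eq.trans ?_ (linkedE_pow_apply false (d - 1) 0).symm
    simp [stringCoeff_zero]
  L_smul := (stringDiag_apply _ _ _).trans (by simp [linkedL, stringWeight])
  T_smul := (stringDiag_apply _ _ _).trans (by simp [linkedT])

open Sl2Generators in
lemma linkedGenerators_F_pow (hp : IsPrimitiveRoot p N) (hN : Even N) (hd : Odd d)
    (hdN : d < N) (hτ : τ ^ 2 = 1) : (linkedGenerators hp hN hd hdN hτ).F ^ N = 0 := by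
  set X := linkedGenerators hp hN hd hdN hτ
  have h := isLinkedPair_linkedGenerators hp hN hd hdN hτ
  have hpow : X.F ^ N = X.F ^ (N - 1) * X.F := (pow_sub_one_mul X.pos.ne' X.F).symm
  have hfirst : ∀ b, X.F ^ N • stringVec k N b 0 = 0 := by
    rintro (_ | _)
    · rw [hpow, mul_smul, h.isLowestWeight.F_smul, smul_zero]
    · rw [hpow, mul_smul, h.F_smul]
      exact h.isLowestWeight.F_pow_smul_E_pow_smul_of_lt (Nat.sub_lt_sub_right h.pos hdN)
  refine linkedModule_end_ext fun b s => ?_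
  have hvec : stringVec k N b s = X.E ^ s • stringVec k N b 0 :=
    ((linkedE_pow_apply b s 0).trans (by rw [zero_add])).symm
  rw [hvec, ← Module.End.smul_def, smul_smul, (commute_F_pow_E.pow_right s).eq, mul_smul, hfirst,
    smul_zero, LinearMap.zero_apply]

end LinkedModule

namespace Sl2Generators

open Submodule

variable {k A M : Type*} [Field k] [Ring A] [Algebra k A] [AddCommGroup M] [Module A M]
  [Module k M] [IsScalarTower k A M] {N : ℕ} {p : k} {X : Sl2Generators A N p}

variable (X) in
/-- No weight projector is killed by `F ^ (N - 1)` followed, on the left or on the right, by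
`E ^ (N - 1)`; together with `F ^ N = 0` this forces the triangular decomposition. -/
structure IsNondegenerate : Prop where
  left : ∀ i j, X.E ^ (N - 1) * X.F ^ (N - 1) * X.weightSum i j ≠ 0
  right : ∀ i j, X.F ^ (N - 1) * X.weightSum i j * X.E ^ (N - 1) ≠ 0

lemma weightSum_smul {c i j : ℕ} {v : M} (hc : N ∣ c + 2 * i) (hL : X.L • v = p ^ c • v)
    (hT : X.T • v = (-1 : k) ^ j • v) : X.weightSum i j • v = (N : k) • v := by
  have hinv : (p ^ 2) ^ i * p ^ c = 1 := by
    rw [← pow_mul, ← pow_add, add_comm, (X.isPrimitiveRoot.pow_eq_one_iff_dvd _).2 hc]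
  rw [weightSum, mul_smul, cyclicSum_smul hL hinv, smul_comm,
    cyclicSum_smul hT (by rw [← pow_add, Even.neg_one_pow ⟨j, rfl⟩]), smul_smul, ← Nat.cast_mul,
    Nat.div_mul_cancel X.even.two_dvd]

namespace IsLinkedPair

variable {d : ℕ} {τ : k} {α γ : M}

lemma E_pow_smul_F_pow_smul_gamma_ne_zero (hG : Algebra.adjoin k {X.E, X.F, X.L, X.T} = ⊤)
    (h : X.IsLinkedPair d τ α γ) :
    X.E ^ (N - 1) • X.F ^ (N - 1) • X.E ^ (N - 1 - d) • γ ≠ 0 := fun h0 => by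
  obtain ⟨C, hC, hmem⟩ := h.exists_F_pow_smul_sub_mem
  obtain ⟨a, ha⟩ := mem_span_singleton.1 hmem
  have hα := h.isSimpleLowestWeight.E_pow_smul_smul hG h.pos a
  rw [ha, smul_sub, h0, zero_sub, neg_eq_zero, smul_comm] at hα
  exact smul_ne_zero hC h.E_pow_smul_ne_zero hα

lemma F_pow_smul_E_pow_smul_gamma_ne_zero (h : X.IsLinkedPair d τ α γ) :
    X.F ^ (N - 1) • X.E ^ (N - 1) • γ ≠ 0 := fun h0 => by
  have := h.lt
  obtain ⟨C, hC, hγ⟩ := h.exists_F_pow_smul_E_pow_smul_eq_smul_alpha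
  obtain ⟨C', hC', hα⟩ :=
    h.isSimpleLowestWeight.exists_F_pow_smul_E_pow_smul_eq (r := N - 1 - d) (by omega)
  have hd : N - 1 - d + d = N - 1 := by omega
  rw [smul_smul (X.E ^ _), ← pow_add, hd] at hα
  rw [← hd, pow_add X.F, mul_smul, hd, hγ, smul_comm, hα] at h0
  exact smul_ne_zero hC (smul_ne_zero hC' h.isSimpleLowestWeight.ne_zero) h0

end IsLinkedPair

lemma exists_odd_lt_dvd (X : Sl2Generators A N p) (m : ℕ) :
    ∃ d, Odd d ∧ d < N ∧ N ∣ d + 2 * m + 1 := by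
  obtain ⟨H, hH⟩ := X.even.two_dvd
  have hlt := Nat.mod_lt (2 * m) X.pos
  have hdiv := Nat.mod_add_div (2 * m) N
  have heven : Even (2 * m % N) := by
    rw [hH, Nat.mul_mod_mul_left]
    exact even_two_mul _
  refine ⟨N - 1 - 2 * m % N, ?_, by omega, ⟨2 * m / N + 1, ?_⟩⟩
  · obtain ⟨t, ht⟩ := heven
    exact ⟨H - 1 - t, by omega⟩
  · rw [mul_add_one]
    omega

lemma IsLinkedPair.exists_module {B M : Type*} [Ring B] [Algebra k B] [AddCommGroup M]
    [Module B M] [Module k M] [IsScalarTower k B M] {X' : Sl2Generators B N p} {d : ℕ} {τ : k}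
    {α γ : M} (h : X'.IsLinkedPair d τ α γ) (φ : A →ₐ[k] B) (hE : φ X.E = X'.E)
    (hF : φ X.F = X'.F) (hL : φ X.L = X'.L) (hT : φ X.T = X'.T) :
    ∃ (_ : Module A M) (_ : IsScalarTower k A M), X.IsLinkedPair d τ α γ := by
  let _ : Module A M := Module.compHom M (φ : A →+* B)
  have hφ (a : A) (v : M) : a • v = φ a • v := rfl
  refine ⟨inferInstance, ⟨fun c a v => by rw [hφ, hφ, map_smul, smul_assoc]⟩, h.pos, h.lt, h.odd,
    ⟨?_, ?_, ?_⟩, ?_, ?_, ?_, ?_⟩ <;> simp only [hφ, map_pow, hE, hF, hL, hT]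
  exacts [h.isLowestWeight.F_smul, h.isLowestWeight.L_smul, h.isLowestWeight.T_smul,
    h.E_pow_smul_ne_zero, h.F_smul, h.L_smul, h.T_smul]

lemma isNondegenerate_of_forall_exists_module {M : Type*} [AddCommGroup M] [Module k M]
    (hG : Algebra.adjoin k {X.E, X.F, X.L, X.T} = ⊤)
    (hM : ∀ (d : ℕ) (τ : k), Odd d → d < N → τ ^ 2 = 1 →
      ∃ (_ : Module A M) (_ : IsScalarTower k A M) (α γ : M), X.IsLinkedPair d τ α γ) :
    X.IsNondegenerate where
  left i j h0 := by
    obtain ⟨d, hd, hdN, hdvd⟩ := X.exists_odd_lt_dvd ((N - 1) * i)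
    obtain ⟨_, _, α, γ, h⟩ := hM d ((-1) ^ j) hd hdN (by rw [← pow_mul, mul_comm, pow_mul]; simp)
    have hT : X.T • X.E ^ (N - 1 - d) • γ = (-1 : k) ^ j • X.E ^ (N - 1 - d) • γ := by
      have heven : Even (N - 1 - d) := by grind [X.even]
      rw [T_smul_E_pow_smul h.T_smul, heven.neg_one_pow, one_mul]
    have hdvd' : N ∣ d + 1 + 2 * (N - 1 - d) + 2 * i := by
      refine (Nat.dvd_add_right hdvd).1 ⟨2 * i + 2, ?_⟩
      obtain ⟨r, rfl⟩ := Nat.exists_eq_add_of_lt hdN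
      simp only [Nat.add_sub_cancel, Nat.add_sub_cancel_left]
      ring
    have hW := weightSum_smul hdvd' (L_smul_E_pow_smul h.L_smul _) hT
    refine smul_ne_zero X.natCast_ne_zero (h.E_pow_smul_F_pow_smul_gamma_ne_zero hG) ?_
    rw [← smul_comm (X.E ^ _), ← smul_comm (X.F ^ _), ← hW, smul_smul, smul_smul, h0, zero_smul]
  right i j h0 := by
    obtain ⟨d, hd, hdN, hdvd⟩ := X.exists_odd_lt_dvd (i + (N - 1))
    obtain ⟨_, _, α, γ, h⟩ := hM d (-(-1) ^ j) hd hdN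
      (by rw [neg_sq, ← pow_mul, mul_comm, pow_mul]; simp)
    have hdvd' : N ∣ d + 1 + 2 * (N - 1) + 2 * i := by
      rwa [show d + 1 + 2 * (N - 1) + 2 * i = d + 2 * (i + (N - 1)) + 1 by ring]
    have hW := weightSum_smul (j := j) hdvd' (L_smul_E_pow_smul h.L_smul _)
      (by rw [h.T_smul_E_pow_smul_gamma, neg_neg])
    refine smul_ne_zero X.natCast_ne_zero h.F_pow_smul_E_pow_smul_gamma_ne_zero ?_
    rw [← smul_comm (X.F ^ _), ← hW, smul_smul, smul_smul, h0, zero_smul]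

end Sl2Generators

/-! ### The triangular decomposition -/

lemma eq_top_of_forall_mul_mem {k A : Type*} [Field k] [Ring A] [Algebra k A] {s : Set A}
    (hs : Algebra.adjoin k s = ⊤) {Q : Submodule k A} (h1 : 1 ∈ Q)
    (hQ : ∀ x ∈ s, ∀ y ∈ Q, x * y ∈ Q) : Q = ⊤ := by
  suffices h : ∀ a ∈ Algebra.adjoin k s, ∀ y ∈ Q, a * y ∈ Q from
    eq_top_iff.2 fun a _ => by simpa using h a (hs ▸ Algebra.mem_top) 1 h1
  intro a ha
  induction ha using Algebra.adjoin_induction with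
  | mem x hx => exact hQ x hx
  | algebraMap c => exact fun y hy => by simpa [Algebra.smul_def] using Q.smul_mem c hy
  | add x y _ _ hx hy => exact fun z hz => add_mul x y z ▸ Q.add_mem (hx z hz) (hy z hz)
  | mul x y _ _ hx hy => exact fun z hz => mul_assoc x y z ▸ hx _ (hy z hz)

lemma aeval_mulRight_apply {k A : Type*} [Field k] [Ring A] [Algebra k A] (E v : A) (r : k[X]) :
    aeval (LinearMap.mulRight k E) r v = v * aeval E r := by
  induction r using Polynomial.induction_on' with
  | add r s hr hs => rw [map_add, LinearMap.add_apply, hr, hs, map_add, mul_add]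
  | monomial m c => simp [aeval_monomial, LinearMap.pow_mulRight, Algebra.algebraMap_eq_smul_one]

namespace Sl2Generators

open Submodule

variable {k A : Type*} [Field k] [Ring A] [Algebra k A] {N : ℕ} {p : k}
  {X : Sl2Generators A N p}

variable (X) in
/-- The span of the monomials in `L`, `T` and `E`. -/
def borelSpan : Submodule k A :=
  span k (Set.range fun t : ℕ × ℕ × ℕ => X.L ^ t.1 * X.T ^ t.2.1 * X.E ^ t.2.2)

variable (X) in
/-- The span of the products `F ^ a * y` with `a < m` and `y ∈ borelSpan`, built up so that it
comes with the decomposition of its elements by powers of `F`. -/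
def triangularSpan : ℕ → Submodule k A
  | 0 => ⊥
  | m + 1 => X.borelSpan ⊔ (triangularSpan m).map (LinearMap.mulLeft k X.F)

lemma monomial_mem_borelSpan (c d b : ℕ) : X.L ^ c * X.T ^ d * X.E ^ b ∈ X.borelSpan :=
  subset_span ⟨(c, d, b), rfl⟩

lemma mul_mem_borelSpan {a y : A} (ha : ∀ c d b, a * (X.L ^ c * X.T ^ d * X.E ^ b) ∈ X.borelSpan)
    (hy : y ∈ X.borelSpan) : a * y ∈ X.borelSpan := by
  refine (span_le (p := X.borelSpan.comap (LinearMap.mulLeft k a))).2 ?_ hy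
  rintro _ ⟨⟨c, d, b⟩, rfl⟩
  exact ha c d b

lemma one_mem_borelSpan : 1 ∈ X.borelSpan := by
  simpa using monomial_mem_borelSpan (X := X) 0 0 0

lemma L_mul_mem_borelSpan {y : A} (hy : y ∈ X.borelSpan) : X.L * y ∈ X.borelSpan :=
  mul_mem_borelSpan (fun c d b => by
    simpa only [← mul_assoc, ← pow_succ'] using monomial_mem_borelSpan (c + 1) d b) hy

lemma T_mul_mem_borelSpan {y : A} (hy : y ∈ X.borelSpan) : X.T * y ∈ X.borelSpan :=
  mul_mem_borelSpan (fun c d b => by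
    rw [← mul_assoc, ← mul_assoc, ← (X.commute.pow_left c).eq, mul_assoc (X.L ^ c), ← pow_succ']
    exact monomial_mem_borelSpan c (d + 1) b) hy

lemma E_mul_mem_borelSpan {y : A} (hy : y ∈ X.borelSpan) : X.E * y ∈ X.borelSpan :=
  mul_mem_borelSpan (fun c d b => by
    have hE := ((X.qCommute_L_E.symm (pow_ne_zero 2 X.p_ne_zero)).pow_right c).mul_right
      ((X.qCommute_T_E.symm (neg_ne_zero.2 one_ne_zero)).pow_right d)
    rw [← mul_assoc, hE.eq, smul_mul_assoc, mul_assoc, ← pow_succ']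
    exact X.borelSpan.smul_mem _ (monomial_mem_borelSpan c d (b + 1))) hy

lemma mem_triangularSpan_succ {m : ℕ} {x : A} :
    x ∈ X.triangularSpan (m + 1) ↔
      ∃ y ∈ X.borelSpan, ∃ z ∈ X.triangularSpan m, y + X.F * z = x := by
  simp [triangularSpan, mem_sup]

lemma borelSpan_le_triangularSpan (m : ℕ) : X.borelSpan ≤ X.triangularSpan (m + 1) :=
  le_sup_left

lemma F_mul_mem_triangularSpan {m : ℕ} {x : A} (hx : x ∈ X.triangularSpan m) :
    X.F * x ∈ X.triangularSpan (m + 1) :=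
  le_sup_right (a := X.borelSpan) (mem_map_of_mem hx)

lemma triangularSpan_le_succ (m : ℕ) : X.triangularSpan m ≤ X.triangularSpan (m + 1) := by
  induction m with
  | zero => exact bot_le
  | succ m ih => exact sup_le_sup_left (map_mono ih) _

lemma F_pow_mul_mem_triangularSpan {a m : ℕ} (ha : a < m) {y : A} (hy : y ∈ X.borelSpan) :
    X.F ^ a * y ∈ X.triangularSpan m := by
  induction m generalizing a with
  | zero => omega
  | succ m ih =>
    cases a with
    | zero => simpa using borelSpan_le_triangularSpan m hy
    | succ a =>
      rw [pow_succ', mul_assoc]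
      exact F_mul_mem_triangularSpan (ih (by omega))

lemma triangularSpan_le {m : ℕ} {Q : Submodule k A}
    (hQ : ∀ a < m, ∀ y ∈ X.borelSpan, X.F ^ a * y ∈ Q) : X.triangularSpan m ≤ Q := by
  induction m generalizing Q with
  | zero => exact bot_le
  | succ m ih =>
    refine sup_le (fun y hy => by simpa using hQ 0 m.succ_pos y hy) (map_le_iff_le_comap.2 ?_)
    refine ih fun a ha y hy => ?_
    simpa [pow_succ', mul_assoc] using hQ (a + 1) (by omega) y hy

lemma mul_mem_triangularSpan_of_qCommute {c : k} {a : A} (ha : QCommute c a X.F)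
    (hB : ∀ y ∈ X.borelSpan, a * y ∈ X.borelSpan) {m : ℕ} {x : A} (hx : x ∈ X.triangularSpan m) :
    a * x ∈ X.triangularSpan m := by
  induction m generalizing x with
  | zero => rw [(mem_bot k).1 hx, mul_zero]; exact zero_mem _
  | succ m ih =>
    obtain ⟨y, hy, z, hz, rfl⟩ := mem_triangularSpan_succ.1 hx
    rw [mul_add, ← mul_assoc, ha.eq, smul_mul_assoc, mul_assoc]
    exact add_mem (borelSpan_le_triangularSpan m (hB y hy))
      (smul_mem _ _ (F_mul_mem_triangularSpan (ih hz)))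

lemma L_mul_mem_triangularSpan {m : ℕ} {x : A} (hx : x ∈ X.triangularSpan m) :
    X.L * x ∈ X.triangularSpan m :=
  mul_mem_triangularSpan_of_qCommute (X.qCommute_F_L.symm (pow_ne_zero 2 X.p_ne_zero))
    (fun _ => L_mul_mem_borelSpan) hx

lemma T_mul_mem_triangularSpan {m : ℕ} {x : A} (hx : x ∈ X.triangularSpan m) :
    X.T * x ∈ X.triangularSpan m :=
  mul_mem_triangularSpan_of_qCommute (X.qCommute_F_T.symm (neg_ne_zero.2 one_ne_zero))
    (fun _ => T_mul_mem_borelSpan) hx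

lemma E_mul_mem_triangularSpan {m : ℕ} {x : A} (hx : x ∈ X.triangularSpan m) :
    X.E * x ∈ X.triangularSpan m := by
  induction m generalizing x with
  | zero => rw [(mem_bot k).1 hx, mul_zero]; exact zero_mem _
  | succ m ih =>
    obtain ⟨y, hy, z, hz, rfl⟩ := mem_triangularSpan_succ.1 hx
    have hEF : X.E * (X.F * z) = p⁻¹ • (X.F * (X.E * z) - z + X.L * z) := by
      rw [← mul_assoc X.F, X.F_mul_E, sub_mul, add_mul, one_mul, smul_mul_assoc, mul_assoc,
        eq_inv_smul_iff₀ X.p_ne_zero]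
      abel
    rw [mul_add, hEF]
    have hz' := triangularSpan_le_succ m hz
    exact add_mem (borelSpan_le_triangularSpan m (E_mul_mem_borelSpan hy)) (smul_mem _ _
      (add_mem (sub_mem (F_mul_mem_triangularSpan (ih hz)) hz') (L_mul_mem_triangularSpan hz')))

section

variable (hF : X.F ^ N = 0)
include hF

lemma exists_F_pow_mul_eq {m : ℕ} (hm : m < N) {x : A} (hx : x ∈ X.triangularSpan (m + 1)) :
    ∃ x' ∈ X.triangularSpan m, X.F ^ (N - m) * x = X.F ^ (N - m) * x' := by
  induction m generalizing x with
  | zero => exact ⟨0, zero_mem _, by rw [Nat.sub_zero, hF, zero_mul, zero_mul]⟩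
  | succ m ih =>
    obtain ⟨y, hy, z, hz, rfl⟩ := mem_triangularSpan_succ.1 hx
    obtain ⟨z', hz', hzz'⟩ := ih (by omega) hz
    refine ⟨y + X.F * z', mem_triangularSpan_succ.2 ⟨y, hy, z', hz', rfl⟩, ?_⟩
    rw [mul_add, mul_add, ← mul_assoc, ← mul_assoc, ← pow_succ,
      show N - (m + 1) + 1 = N - m by omega, hzz']

lemma exists_F_mul_eq {x : A} (hx : x ∈ X.triangularSpan N) :
    ∃ x' ∈ X.triangularSpan (N - 1), X.F * x = X.F * x' := by
  rw [← congrArg X.triangularSpan (Nat.sub_add_cancel X.one_lt.le)] at hx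
  simpa only [Nat.sub_sub_self X.one_lt.le, pow_one] using
    exists_F_pow_mul_eq hF (Nat.sub_one_lt X.pos.ne') hx

lemma triangularSpan_eq_top (hG : Algebra.adjoin k {X.E, X.F, X.L, X.T} = ⊤) :
    X.triangularSpan N = ⊤ := by
  have hN := congrArg X.triangularSpan (Nat.sub_add_cancel X.one_lt.le)
  refine eq_top_of_forall_mul_mem hG ?_ ?_
  · rw [← hN]
    exact borelSpan_le_triangularSpan _ one_mem_borelSpan
  · rintro _ (rfl | rfl | rfl | rfl) x hx
    · exact E_mul_mem_triangularSpan hx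
    · obtain ⟨x', hx', h⟩ := exists_F_mul_eq hF hx
      rw [h, ← hN]
      exact F_mul_mem_triangularSpan hx'
    · exact L_mul_mem_triangularSpan hx
    · exact T_mul_mem_triangularSpan hx

lemma eq_zero_of_F_pow_mul_eq_zero (hB : ∀ y ∈ X.borelSpan, X.F ^ (N - 1) * y = 0 → y = 0)
    {m : ℕ} (hm : m ≤ N) {x : A} (hx : x ∈ X.triangularSpan m) (h : X.F ^ (N - m) * x = 0) :
    x = 0 := by
  induction m generalizing x with
  | zero => exact (mem_bot k).1 hx
  | succ m ih =>
    obtain ⟨y, hy, z, hz, rfl⟩ := mem_triangularSpan_succ.1 hx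
    have hy0 : y = 0 := hB y hy <| by
      have h0 := congrArg (X.F ^ m * ·) h
      simp only [mul_zero, ← mul_assoc, ← pow_add, mul_add] at h0
      rwa [← pow_succ, show m + (N - (m + 1)) + 1 = N by omega, hF, zero_mul, add_zero,
        show m + (N - (m + 1)) = N - 1 by omega] at h0
    rw [hy0, zero_add, ← mul_assoc, ← pow_succ, show N - (m + 1) + 1 = N - m by omega] at h
    rw [hy0, zero_add, ih (by omega) hz h, mul_zero]

end

variable (X) in
lemma exists_weightSum_mul_eq (i j : ℕ) {y : A} (hy : y ∈ X.borelSpan) :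
    ∃ r : k[X], X.weightSum i j * y = X.weightSum i j * aeval X.E r := by
  obtain ⟨c, hc⟩ : ∃ c, N ∣ c + 2 * i := ⟨(N - 1) * (2 * i), 2 * i, by
    rw [← Nat.succ_mul, Nat.succ_eq_add_one, Nat.sub_add_cancel X.one_lt.le]⟩
  let Q : Submodule k A :=
    (LinearMap.range (LinearMap.mulLeft k (X.weightSum i j) ∘ₗ (aeval X.E).toLinearMap)).comap
      (LinearMap.mulLeft k (X.weightSum i j))
  suffices h : X.borelSpan ≤ Q by
    obtain ⟨r, hr⟩ := h hy
    exact ⟨r, hr.symm⟩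
  refine span_le.2 ?_
  rintro _ ⟨⟨a, b, s⟩, rfl⟩
  have hpow : ∀ {Y : A} {c : k}, X.weightSum i j * Y = c • X.weightSum i j → ∀ m,
      X.weightSum i j * Y ^ m = c ^ m • X.weightSum i j := fun {Y c} h m => by
    induction m with
    | zero => simp
    | succ m ih => rw [pow_succ', ← mul_assoc, h, smul_mul_assoc, ih, smul_smul, ← pow_succ']
  refine ⟨((p ^ c) ^ a * ((-1) ^ j) ^ b) • Polynomial.X ^ s, ?_⟩
  simp [← mul_assoc, hpow (weightSum_mul_L hc j), hpow (weightSum_mul_T i j), smul_smul]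

lemma eq_zero_of_F_pow_mul_eq_zero_of_mem_borelSpan (hX : X.IsNondegenerate) {y : A}
    (hy : y ∈ X.borelSpan) (h : X.F ^ (N - 1) * y = 0) : y = 0 := by
  by_contra hy0
  obtain ⟨i, -, j, hne⟩ := exists_weightSum_smul_ne_zero (X := X) hy0
  obtain ⟨r, hr⟩ := X.exists_weightSum_mul_eq i j hy
  rw [smul_eq_mul, hr] at hne
  have hFr : X.F ^ (N - 1) * X.weightSum i j * aeval X.E r = 0 := by
    rw [mul_assoc, ← hr, ← mul_assoc, F_pow_mul_weightSum, mul_assoc, h, mul_zero]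
  have hdvd : Polynomial.X ^ N ∣ r := by
    refine (aeval_smul_eq_zero_iff (E := LinearMap.mulRight k X.E)
      (v := X.F ^ (N - 1) * X.weightSum i j) ?_ ?_ r).1 ((aeval_mulRight_apply _ _ _).trans hFr)
    · rw [LinearMap.pow_mulRight, X.E_pow]
      exact mul_zero _
    · rw [LinearMap.pow_mulRight]
      exact hX.right i j
  obtain ⟨s, rfl⟩ := hdvd
  rw [map_mul, map_pow, aeval_X, X.E_pow, zero_mul, mul_zero] at hne
  exact hne rfl

lemma F_mul_injOn_triangularSpan (hF : X.F ^ N = 0) (hX : X.IsNondegenerate) :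
    Set.InjOn (X.F * ·) (X.triangularSpan (N - 1)) := fun x hx y hy hxy => by
  refine sub_eq_zero.1 (eq_zero_of_F_pow_mul_eq_zero hF (m := N - 1)
    (fun _ => eq_zero_of_F_pow_mul_eq_zero_of_mem_borelSpan hX) (Nat.sub_le N 1)
    (sub_mem hx hy) ?_)
  rw [Nat.sub_sub_self X.one_lt.le, pow_one, mul_sub]
  exact sub_eq_zero.2 hxy

lemma exists_E_pow_mul_F_pow_eq (m a : ℕ) : ∃ z, X.E ^ m * X.F ^ (a + m) = X.F ^ a * z := by
  induction m with
  | zero => exact ⟨1, by simp⟩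
  | succ m ih =>
    obtain ⟨z, hz⟩ := ih
    obtain ⟨z', hz'⟩ : ∃ z', X.E * X.F ^ (a + m + 1) = X.F ^ (a + m) * z' := by
      have h := X.F_pow_succ_mul_E (a + m)
      rw [pow_succ _ (a + m), mul_assoc] at h
      refine ⟨(p ^ (a + m + 1))⁻¹ • (X.F * X.E -
        ((∑ t ∈ Finset.range (a + m + 1), p ^ t) • 1 -
          (∑ t ∈ Finset.range (a + m + 1), p⁻¹ ^ t) • X.L)), ?_⟩
      rw [mul_smul_comm, mul_sub, eq_inv_smul_iff₀ (pow_ne_zero _ X.p_ne_zero), h, pow_succ X.F,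
        add_sub_cancel_right]
    exact ⟨z * z', by rw [pow_succ, mul_assoc, ← add_assoc, hz', ← mul_assoc, hz, mul_assoc]⟩

lemma existsUnique_F_mul_eq (hG : Algebra.adjoin k {X.E, X.F, X.L, X.T} = ⊤)
    (hF : X.F ^ N = 0) (hX : X.IsNondegenerate) {m : ℕ} (hm : m + 1 < N) (y : A) :
    ∃! γ, γ ∈ X.triangularSpan (N - 1) ∧ X.F * γ = X.E ^ m * (X.F ^ (N - 1) * y) := by
  obtain ⟨z, hz⟩ := X.exists_E_pow_mul_F_pow_eq m 1
  have hFx : X.F * (z * X.F ^ (N - 1 - (1 + m)) * y) = X.E ^ m * (X.F ^ (N - 1) * y) := by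
    rw [pow_one] at hz
    rw [← mul_assoc, ← mul_assoc, ← hz, mul_assoc (X.E ^ m), ← pow_add,
      Nat.add_sub_cancel' (by omega), mul_assoc]
  obtain ⟨γ, hγ, hFγ⟩ := exists_F_mul_eq hF (triangularSpan_eq_top hF hG ▸ mem_top (x := _))
  exact ⟨γ, ⟨hγ, hFγ.symm.trans hFx⟩, fun γ' ⟨hγ', hFγ'⟩ =>
    F_mul_injOn_triangularSpan hF hX hγ' hγ (hFγ'.trans (hFx.symm.trans hFγ))⟩

lemma isLowestWeight_F_pow_mul_weightSum (hF : X.F ^ N = 0) {e i : ℕ}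
    (he : N ∣ e + 1 + 2 * (N - 1 + i)) (j : ℕ) :
    X.IsLowestWeight e (-(-1) ^ j) (X.F ^ (N - 1) * X.weightSum i j) where
  F_smul := by
    rw [smul_eq_mul, ← mul_assoc, ← pow_succ', Nat.sub_add_cancel X.one_lt.le, hF, zero_mul]
  L_smul := by
    rw [smul_eq_mul, F_pow_mul_weightSum, ← mul_assoc, L_mul_weightSum he, smul_mul_assoc]
  T_smul := by
    have hN : Odd (N - 1) := Nat.Even.sub_odd X.one_lt.le X.even odd_one
    rw [smul_eq_mul, F_pow_mul_weightSum, ← mul_assoc, T_mul_weightSum, smul_mul_assoc, pow_add,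
      hN.neg_one_pow, neg_one_mul]

lemma IsLowestWeight.const_smul {e : ℕ} {τ : k} {v : A} (h : X.IsLowestWeight e τ v) (c : k) :
    X.IsLowestWeight e τ (c • v) where
  F_smul := by rw [smul_comm, h.F_smul, smul_zero]
  L_smul := by rw [smul_comm, h.L_smul, smul_comm]
  T_smul := by rw [smul_comm, h.T_smul, smul_comm]

lemma isLinkedPair_of_mem_triangularSpan (hF : X.F ^ N = 0) (hX : X.IsNondegenerate) {i j : ℕ}
    {c : k} (hc : c ≠ 0) (hi : 0 < i) (hiN : 2 * i ≤ N) {γ : A}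
    (hγ : γ ∈ X.triangularSpan (N - 1))
    (hFγ : X.F * γ = X.E ^ (2 * i - 2) * (X.F ^ (N - 1) * c • X.weightSum i j)) :
    X.IsLinkedPair (2 * i - 1) ((-1) ^ j) (X.F ^ (N - 1) * c • X.weightSum i j) γ := by
  have hα : X.IsLowestWeight (N - (2 * i - 1)) (-(-1) ^ j)
      (X.F ^ (N - 1) * c • X.weightSum i j) := by
    rw [mul_smul_comm]
    refine (isLowestWeight_F_pow_mul_weightSum hF ⟨3, ?_⟩ j).const_smul c
    omega
  set α := X.F ^ (N - 1) * c • X.weightSum i j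
  refine ⟨by omega, by omega, ⟨i - 1, by omega⟩, hα, ?_, by simpa [Nat.sub_sub] using hFγ, ?_, ?_⟩
  · rw [smul_eq_mul, ← mul_assoc, mul_smul_comm]
    exact smul_ne_zero hc (hX.left i j)
  · refine F_mul_injOn_triangularSpan hF hX (L_mul_mem_triangularSpan hγ) (smul_mem _ _ hγ) ?_
    have hL : X.L * (X.F * γ) = p ^ (N - (2 * i - 1) + 1 + 2 * (2 * i - 2)) • (X.F * γ) :=
      hFγ ▸ L_smul_E_pow_smul hα.L_smul _
    change X.F * (X.L * γ) = X.F * (_ • γ)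
    rw [← mul_assoc, X.qCommute_F_L.eq, smul_mul_assoc, mul_assoc, hL, smul_smul, ← pow_add,
      show 2 + (N - (2 * i - 1) + 1 + 2 * (2 * i - 2)) = 2 * i - 1 + 1 + N by omega,
      X.pow_add_card, mul_smul_comm]
  · refine F_mul_injOn_triangularSpan hF hX (T_mul_mem_triangularSpan hγ) (smul_mem _ _ hγ) ?_
    have hT : X.T * (X.F * γ) = ((-1 : k) ^ (2 * i - 2) * -(-1) ^ j) • (X.F * γ) :=
      hFγ ▸ T_smul_E_pow_smul hα.T_smul _
    have heven : Even (2 * i - 2) := ⟨i - 1, by omega⟩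
    change X.F * (X.T * γ) = X.F * (_ • γ)
    rw [← mul_assoc, X.qCommute_F_T.eq, smul_mul_assoc, mul_assoc, hT, heven.neg_one_pow, one_mul,
      smul_smul, neg_mul_neg, one_mul, mul_smul_comm]

end Sl2Generators

/-! ### Change of torus generators -/

lemma pow_eq_neg_one_of_two_mul_eq {k : Type*} [Field k] {q : k} {N M : ℕ}
    (hq : IsPrimitiveRoot q N) (hM : 0 < M) (hN : 2 * M = N) : q ^ M = -1 :=
  (sq_eq_one_iff.1 (by rw [← pow_mul, mul_comm, hN, hq.pow_eq_one])).resolve_left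
    (hq.pow_ne_one_of_pos_of_lt hM.ne' (by omega))

section TorusExponent

/-- The exponent `e` for which `K = T * L ^ e`, where `L = K⁻¹ K̂` and `T = K K̂ ^ (n / 2)`. -/
def torusExponent (n : ℕ) : ℕ := n / 2 * (n / 2 - 1)

variable {n : ℕ} (h4 : 4 ∣ n)
include h4

lemma torusExponent_add_half : torusExponent n + n / 2 = n * (n / 4) := by
  obtain ⟨m, rfl⟩ := h4
  obtain rfl | hm := m.eq_zero_or_pos
  · rfl
  rw [torusExponent, show 4 * m / 2 = 2 * m by omega, Nat.mul_div_cancel_left m (by omega),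
    ← Nat.mul_add_one, Nat.sub_add_cancel (by omega)]
  ring

lemma half_sq_eq : n ^ 2 / 2 = n * (n / 2) := by
  obtain ⟨m, rfl⟩ := h4
  rw [show (4 * m) ^ 2 = 2 * (4 * m * (2 * m)) by ring, Nat.mul_div_cancel_left _ two_pos,
    show 4 * m / 2 = 2 * m by omega]

lemma two_mul_torusExponent_add : 2 * torusExponent n + n = n ^ 2 / 2 := by
  have h := torusExponent_add_half h4
  obtain ⟨m, rfl⟩ := h4
  rw [Nat.mul_div_cancel_left m (by omega)] at h
  rw [half_sq_eq ⟨m, rfl⟩, show 4 * m / 2 = 2 * m by omega] at *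
  linarith

lemma half_sq_dvd_torusExponent_mul : n ^ 2 / 2 ∣ torusExponent n * n := by
  rw [half_sq_eq h4, torusExponent]
  exact ⟨n / 2 - 1, by ring⟩

lemma half_sq_dvd_torusExponent_mul_add :
    n ^ 2 / 2 ∣ torusExponent n * (n / 2 + 1) + n / 2 := by
  refine ⟨n / 4, ?_⟩
  rw [mul_add_one, add_assoc, torusExponent_add_half h4, half_sq_eq h4]
  have h := torusExponent_add_half h4
  obtain ⟨m, rfl⟩ := h4
  rw [Nat.mul_div_cancel_left m (by omega), show 4 * m / 2 = 2 * m by omega] at *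
  linarith [congrArg (2 * m * ·) h]

end TorusExponent

section RootOfUnity

variable {k : Type*} [Field k] {n : ℕ} {q : k}
  (hq : IsPrimitiveRoot q (n ^ 2)) (hn : 0 < n) (h4 : 4 ∣ n)
include hq hn h4

lemma pow_pow_half_eq_neg_one : (q ^ n) ^ (n / 2) = -1 := by
  have hn2 : 0 < n / 2 := Nat.div_pos (Nat.le_of_dvd hn (dvd_trans (by norm_num) h4)) two_pos
  rw [← pow_mul]
  refine pow_eq_neg_one_of_two_mul_eq hq (by positivity) ?_
  rw [← half_sq_eq h4, Nat.mul_div_cancel' (dvd_pow (dvd_trans (by norm_num) h4) two_ne_zero)]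

lemma neg_one_mul_pow_torusExponent : -1 * (q⁻¹ ^ 2) ^ torusExponent n = q ^ n := by
  have hq0 : q ≠ 0 := hq.ne_zero (by positivity)
  have h : q ^ (2 * torusExponent n + n) = -1 := by
    rw [two_mul_torusExponent_add h4, half_sq_eq h4, pow_mul, pow_pow_half_eq_neg_one hq hn h4]
  rw [← h, pow_add, ← pow_mul, inv_pow, mul_right_comm,
    mul_inv_cancel₀ (pow_ne_zero _ hq0), one_mul]

end RootOfUnity

/-- Elements of an algebra satisfying the defining relations of `ũ_q(sl₂)`, with the relations
for conjugation by `K` and `K̂` (here `Kh`) rewritten as commutation relations. -/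
structure QuasiGenerators {k : Type*} [Field k] (A : Type*) [Ring A] [Algebra k A]
    (n : ℕ) (q : k) where
  K : A
  Kh : A
  E : A
  F : A
  K_pow : K ^ n = 1
  Kh_pow : Kh ^ n = (K ^ (n - 1)) ^ 2
  commute : Commute K Kh
  qCommute_K_E : QCommute (q ^ n) K E
  qCommute_K_F : QCommute (q ^ n)⁻¹ K F
  qCommute_Kh_E : QCommute (q ^ n * (q ^ 2)⁻¹) Kh E
  qCommute_Kh_F : QCommute ((q ^ n)⁻¹ * q ^ 2) Kh F
  E_pow : E ^ n ^ 2 = 0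
  F_pow : F ^ n ^ 2 = 0
  F_mul_E : F * E - q⁻¹ • (E * F) = 1 - K ^ (n - 1) * Kh

namespace QuasiGenerators

variable {k A : Type*} [Field k] [Ring A] [Algebra k A] {n : ℕ} {q : k}

section

variable (Y : QuasiGenerators A n q)

/-- The element `K⁻¹ K̂`. -/
def L : A := Y.K ^ (n - 1) * Y.Kh

/-- The element `K K̂ ^ (n / 2)`. -/
def T : A := Y.K * Y.Kh ^ (n / 2)

lemma commute_K_L : Commute Y.K Y.L :=
  ((Commute.refl Y.K).pow_right _).mul_right Y.commute

lemma commute_L_T : Commute Y.L Y.T :=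
  Y.commute_K_L.symm.mul_right <|
    (((Y.commute.symm.pow_right _).mul_right (Commute.refl Y.Kh)).pow_left _).symm

lemma K_pow_mul (m : ℕ) : Y.K ^ (n * m) = 1 := by rw [pow_mul, Y.K_pow, one_pow]

lemma Kh_sq_pow : Y.Kh ^ n ^ 2 = 1 := by
  rw [sq, pow_mul, Y.Kh_pow, ← pow_mul, ← pow_mul,
    show (n - 1) * (2 * n) = n * ((n - 1) * 2) by ring, Y.K_pow_mul]

end

section

variable (Y : QuasiGenerators A n q) (hn : 0 < n)
include hn

lemma K_mul_L : Y.K * Y.L = Y.Kh := by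
  rw [L, ← mul_assoc, ← pow_succ', Nat.sub_add_cancel hn, Y.K_pow, one_mul]

lemma L_pow : Y.L ^ n = (Y.K ^ (n - 1)) ^ 2 := by
  rw [← Y.Kh_pow, ← Y.K_mul_L hn, Y.commute_K_L.mul_pow, Y.K_pow, one_mul]

lemma T_pow (h2 : 2 ∣ n) : Y.T ^ 2 = 1 := by
  rw [T, (Y.commute.pow_right _).mul_pow, ← pow_mul, Nat.div_mul_cancel h2, Y.Kh_pow,
    ← ((Commute.refl Y.K).pow_right _).mul_pow, ← pow_succ', Nat.sub_add_cancel hn, Y.K_pow,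
    one_pow]

lemma T_mul_L_pow (h4 : 4 ∣ n) : Y.T * Y.L ^ torusExponent n = Y.K := by
  have hexp : 1 + n / 2 + (n - 1) * (2 * (n / 4)) = n * (n / 2) + 1 := by
    obtain ⟨r, rfl⟩ := Nat.exists_eq_add_of_lt hn
    rw [show 2 * ((0 + r + 1) / 4) = (0 + r + 1) / 2 by omega, Nat.add_sub_cancel]
    ring
  rw [T, ← Y.K_mul_L hn, Y.commute_K_L.mul_pow, mul_assoc, mul_assoc, ← pow_add,
    add_comm (n / 2), torusExponent_add_half h4, pow_mul, Y.L_pow hn, ← pow_mul, ← pow_mul,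
    ← pow_add, ← pow_succ', ← Nat.add_comm 1, ← add_assoc, hexp, pow_succ, Y.K_pow_mul, one_mul]

end

section

variable (Y : QuasiGenerators A n q) (hq : IsPrimitiveRoot q (n ^ 2)) (hn : 0 < n)
include hq hn

lemma qCommute_L_E : QCommute (q⁻¹ ^ 2) Y.L Y.E := by
  have h := (Y.qCommute_K_E.pow_left (n - 1)).mul_left Y.qCommute_Kh_E
  rwa [← mul_assoc, pow_sub_one_mul hn.ne', ← pow_mul, ← sq, hq.pow_eq_one, one_mul,
    ← inv_pow] at h

lemma qCommute_F_L : QCommute (q⁻¹ ^ 2) Y.F Y.L := by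
  have hq0 : q ≠ 0 := hq.ne_zero (by positivity)
  have h : QCommute _ Y.L Y.F := (Y.qCommute_K_F.pow_left (n - 1)).mul_left Y.qCommute_Kh_F
  rw [← mul_assoc, pow_sub_one_mul hn.ne', inv_pow, ← pow_mul, ← sq, hq.pow_eq_one, inv_one,
    one_mul] at h
  simpa only [inv_pow] using h.symm (pow_ne_zero 2 hq0)

variable (h4 : 4 ∣ n)
include h4

lemma qCommute_T_E : QCommute (-1 : k) Y.T Y.E := by
  have hq0 : q ^ n ≠ 0 := pow_ne_zero n (hq.ne_zero (by positivity))
  have h := Y.qCommute_K_E.mul_left (Y.qCommute_Kh_E.pow_left (n / 2))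
  rwa [mul_pow, pow_pow_half_eq_neg_one hq hn h4, inv_pow, ← pow_mul,
    Nat.mul_div_cancel' (dvd_trans (by norm_num) h4), neg_one_mul, mul_neg,
    mul_inv_cancel₀ hq0] at h

lemma qCommute_F_T : QCommute (-1 : k) Y.F Y.T := by
  have hq0 : q ^ n ≠ 0 := pow_ne_zero n (hq.ne_zero (by positivity))
  have h : QCommute _ Y.T Y.F := Y.qCommute_K_F.mul_left (Y.qCommute_Kh_F.pow_left (n / 2))
  rw [mul_pow, inv_pow, pow_pow_half_eq_neg_one hq hn h4, ← pow_mul,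
    Nat.mul_div_cancel' (dvd_trans (by norm_num) h4), inv_neg_one, neg_one_mul, mul_neg,
    inv_mul_cancel₀ hq0] at h
  simpa only [inv_neg_one] using h.symm (neg_ne_zero.2 one_ne_zero)

end

/-- The presentation of `ũ_q(sl₂)` by `E`, `F`, `L = K⁻¹ K̂` and `T = K K̂ ^ (n / 2)`, in which the
torus is a direct product. -/
def sl2Generators (Y : QuasiGenerators A n q) (hn : 0 < n) (h4 : 4 ∣ n)
    (hq : IsPrimitiveRoot q (n ^ 2)) : Sl2Generators A (n ^ 2) q⁻¹ where
  E := Y.E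
  F := Y.F
  L := Y.L
  T := Y.T
  isPrimitiveRoot := hq.inv
  pos := by positivity
  even := even_iff_two_dvd.2 (dvd_pow (dvd_trans (by norm_num) h4) two_ne_zero)
  L_pow := by
    rw [half_sq_eq h4, pow_mul, Y.L_pow hn, ← pow_mul, ← pow_mul,
      Nat.mul_div_cancel' (dvd_trans (by norm_num) h4), mul_comm, Y.K_pow_mul]
  T_pow := Y.T_pow hn (dvd_trans (by norm_num) h4)
  commute := Y.commute_L_T
  qCommute_L_E := Y.qCommute_L_E hq hn
  qCommute_F_L := Y.qCommute_F_L hq hn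
  qCommute_T_E := Y.qCommute_T_E hq hn h4
  qCommute_F_T := Y.qCommute_F_T hq hn h4
  E_pow := Y.E_pow
  F_mul_E := (sub_eq_iff_eq_add'.1 Y.F_mul_E).trans (add_sub_assoc _ _ _).symm

end QuasiGenerators

namespace Sl2Generators

variable {k A : Type*} [Field k] [Ring A] [Algebra k A] {n : ℕ} {q : k}

lemma pos_of_sq (X : Sl2Generators A (n ^ 2) q⁻¹) : 0 < n :=
  Nat.pos_of_ne_zero fun hn => X.pos.ne' (by rw [hn]; rfl)

section

variable (X : Sl2Generators A (n ^ 2) q⁻¹)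

/-- The element `K` recovered from `L` and `T`. -/
def K : A := X.T * X.L ^ torusExponent n

lemma commute_K_L : Commute X.K X.L :=
  X.commute.symm.mul_left ((Commute.refl X.L).pow_left _)

lemma L_pow_eq_one_of_dvd {m : ℕ} (hm : n ^ 2 / 2 ∣ m) : X.L ^ m = 1 := by
  obtain ⟨c, rfl⟩ := hm
  rw [pow_mul, X.L_pow, one_pow]

lemma T_pow_eq_one_of_even {m : ℕ} (hm : Even m) : X.T ^ m = 1 := by
  obtain ⟨c, rfl⟩ := hm
  rw [← two_mul, pow_mul, X.T_pow, one_pow]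

lemma K_pow (m : ℕ) : X.K ^ m = X.T ^ m * X.L ^ (torusExponent n * m) := by
  rw [K, (X.commute.symm.pow_right _).mul_pow, pow_mul]

variable (h4 : 4 ∣ n)
include h4

lemma K_pow_card : X.K ^ n = 1 := by
  rw [K_pow, X.L_pow_eq_one_of_dvd (half_sq_dvd_torusExponent_mul h4),
    X.T_pow_eq_one_of_even (even_iff_two_dvd.2 (dvd_trans (by norm_num) h4)), one_mul]

lemma K_sq_mul_L_pow : X.K ^ 2 * X.L ^ n = 1 := by
  rw [K_pow, X.T_pow, one_mul, ← pow_add, mul_comm, two_mul_torusExponent_add h4, X.L_pow]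

lemma K_mul_pow_half : X.K * (X.K * X.L) ^ (n / 2) = X.T := by
  rw [X.commute_K_L.mul_pow, ← mul_assoc, ← pow_succ', K_pow, mul_assoc, ← pow_add,
    X.L_pow_eq_one_of_dvd (half_sq_dvd_torusExponent_mul_add h4), pow_succ,
    X.T_pow_eq_one_of_even (even_iff_two_dvd.2 ?_), one_mul, mul_one]
  omega

lemma K_pow_pred_mul : X.K ^ (n - 1) * (X.K * X.L) = X.L := by
  rw [← mul_assoc, pow_sub_one_mul X.pos_of_sq.ne', X.K_pow_card h4, one_mul]

variable (hq : IsPrimitiveRoot q (n ^ 2))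
include hq

lemma qCommute_K_E : QCommute (q ^ n) X.K X.E :=
  neg_one_mul_pow_torusExponent hq X.pos_of_sq h4 ▸
    X.qCommute_T_E.mul_left (X.qCommute_L_E.pow_left _)

lemma qCommute_F_K : QCommute (q ^ n) X.F X.K :=
  neg_one_mul_pow_torusExponent hq X.pos_of_sq h4 ▸
    X.qCommute_F_T.mul_right (X.qCommute_F_L.pow_right _)

end

/-- The generators of the original presentation recovered from `L` and `T`. -/
def quasiGenerators (X : Sl2Generators A (n ^ 2) q⁻¹) (hF : X.F ^ n ^ 2 = 0) (h4 : 4 ∣ n)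
    (hq : IsPrimitiveRoot q (n ^ 2)) : QuasiGenerators A n q where
  K := X.K
  Kh := X.K * X.L
  E := X.E
  F := X.F
  K_pow := X.K_pow_card h4
  Kh_pow := by
    rw [← mul_one ((X.K ^ (n - 1)) ^ 2), ← X.K_sq_mul_L_pow h4, ← mul_assoc,
      ← ((Commute.refl X.K).pow_left _).mul_pow, pow_sub_one_mul X.pos_of_sq.ne',
      X.commute_K_L.mul_pow, X.K_pow_card h4, one_pow]
  commute := (Commute.refl _).mul_right X.commute_K_L
  qCommute_K_E := X.qCommute_K_E h4 hq
  qCommute_K_F := (X.qCommute_F_K h4 hq).symm (pow_ne_zero n (hq.ne_zero X.pos.ne'))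
  qCommute_Kh_E := by
    simpa only [inv_pow] using (X.qCommute_K_E h4 hq).mul_left X.qCommute_L_E
  qCommute_Kh_F := by
    have hq0 : q ≠ 0 := hq.ne_zero X.pos.ne'
    simpa only [mul_inv, inv_pow, inv_inv] using
      ((X.qCommute_F_K h4 hq).mul_right X.qCommute_F_L).symm
        (mul_ne_zero (pow_ne_zero n hq0) (pow_ne_zero 2 (inv_ne_zero hq0)))
  E_pow := X.E_pow
  F_pow := hF
  F_mul_E := by
    rw [X.K_pow_pred_mul h4, X.F_mul_E, add_sub_assoc, add_sub_cancel_left]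

section

variable (X : Sl2Generators A (n ^ 2) q⁻¹) (hF : X.F ^ n ^ 2 = 0) (h4 : 4 ∣ n)
  (hq : IsPrimitiveRoot q (n ^ 2))

lemma quasiGenerators_L : (X.quasiGenerators hF h4 hq).L = X.L := X.K_pow_pred_mul h4

lemma quasiGenerators_T : (X.quasiGenerators hF h4 hq).T = X.T := X.K_mul_pow_half h4

end

end Sl2Generators

namespace QuasiGenerators

open Submodule

variable {k A : Type*} [Field k] [Ring A] [Algebra k A] {n : ℕ} {q : k}
  (Y : QuasiGenerators A n q)

/-- The span of the monomials `F ^ a * K ^ c * K̂ ^ d * E ^ b` of the PBW basis with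
`a ≠ n ^ 2 - 1`. -/
def monomialSpan : Submodule k A :=
  span k {x | ∃ a b c d : ℕ, a ≤ n ^ 2 - 2 ∧ b ≤ n ^ 2 - 1 ∧ c ≤ n - 1 ∧ d ≤ n ^ 2 - 1 ∧
    x = Y.F ^ a * Y.K ^ c * Y.Kh ^ d * Y.E ^ b}

lemma L_pow_mul_T_pow (c d : ℕ) :
    Y.L ^ c * Y.T ^ d = Y.K ^ ((n - 1) * c + d) * Y.Kh ^ (c + n / 2 * d) := by
  rw [L, T, (Y.commute.pow_left _).mul_pow, (Y.commute.pow_right _).mul_pow, ← pow_mul, ← pow_mul,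
    mul_assoc, ← mul_assoc (Y.Kh ^ c), ← (Y.commute.pow_pow _ _).eq, mul_assoc, ← mul_assoc,
    ← pow_add, ← pow_add]

variable (hn : 0 < n)
include hn

lemma K_pow_mul_Kh_pow (h4 : 4 ∣ n) (c d : ℕ) :
    Y.K ^ c * Y.Kh ^ d = Y.L ^ (torusExponent n * (c + d) + d) * Y.T ^ (c + d) := by
  rw [← Y.K_mul_L hn, Y.commute_K_L.mul_pow, ← mul_assoc, ← pow_add, ← Y.T_mul_L_pow hn h4,
    (Y.commute_L_T.symm.pow_right _).mul_pow, ← pow_mul, mul_assoc, ← pow_add,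
    (Y.commute_L_T.pow_pow _ _).eq]

lemma F_pow_mul_L_pow_mul_T_pow_mul_E_pow_mem_monomialSpan {a : ℕ} (ha : a ≤ n ^ 2 - 2)
    (c d b : ℕ) : Y.F ^ a * (Y.L ^ c * Y.T ^ d * Y.E ^ b) ∈ Y.monomialSpan := by
  rcases le_or_gt (n ^ 2) b with hb | hb
  · rw [pow_eq_zero_of_le hb Y.E_pow, mul_zero, mul_zero]
    exact zero_mem _
  rw [Y.L_pow_mul_T_pow, pow_eq_pow_mod _ Y.K_pow, pow_eq_pow_mod (c + n / 2 * d) Y.Kh_sq_pow]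
  exact subset_span ⟨a, b, ((n - 1) * c + d) % n, (c + n / 2 * d) % n ^ 2, ha,
    Nat.le_sub_one_of_lt hb, Nat.le_sub_one_of_lt (Nat.mod_lt _ hn),
    Nat.le_sub_one_of_lt (Nat.mod_lt _ (by positivity)), by simp only [mul_assoc]⟩

lemma monomialSpan_eq_triangularSpan (h4 : 4 ∣ n) (hq : IsPrimitiveRoot q (n ^ 2)) :
    Y.monomialSpan = (Y.sl2Generators hn h4 hq).triangularSpan (n ^ 2 - 1) := by
  have hN := (Y.sl2Generators hn h4 hq).one_lt
  refine le_antisymm (span_le.2 ?_) (Sl2Generators.triangularSpan_le fun a ha y hy => ?_)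
  · rintro _ ⟨a, b, c, d, ha, -, -, -, rfl⟩
    rw [mul_assoc, mul_assoc, ← mul_assoc (Y.K ^ c), Y.K_pow_mul_Kh_pow hn h4]
    exact Sl2Generators.F_pow_mul_mem_triangularSpan (X := Y.sl2Generators hn h4 hq) (by omega)
      (Sl2Generators.monomial_mem_borelSpan _ _ _)
  · refine (span_le (p := comap (LinearMap.mulLeft k (Y.F ^ a)) Y.monomialSpan)).2 ?_ hy
    rintro _ ⟨⟨c, d, b⟩, rfl⟩
    exact Y.F_pow_mul_L_pow_mul_T_pow_mul_E_pow_mem_monomialSpan hn (by omega) c d b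

end QuasiGenerators

/-! ### The algebra defined by the presentation -/

lemma mul_mul_pow_eq_smul_iff {k A : Type*} [Field k] [Ring A] [Algebra k A] {X Y : A} {m : ℕ}
    (hm : 0 < m) (hX : X ^ m = 1) {c : k} :
    X * Y * X ^ (m - 1) = c • Y ↔ QCommute c X Y := by
  have h1 : X ^ (m - 1) * X = 1 := by rw [pow_sub_one_mul hm.ne', hX]
  have h2 : X * X ^ (m - 1) = 1 := by rw [mul_pow_sub_one hm.ne', hX]
  constructor <;> intro h
  · rw [QCommute, ← smul_mul_assoc, ← h, mul_assoc, h1, mul_one]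
  · rw [h.eq, smul_mul_assoc, mul_assoc, h2, mul_one]

section CyclicSumTwo

variable {k A : Type*} [Field k] [Ring A] [Algebra k A] (g : A)

lemma cyclicSum_two_one : cyclicSum 2 (1 : k) g = 1 + g := by
  simp [cyclicSum, Finset.sum_range_succ]

lemma cyclicSum_two_neg_one : cyclicSum 2 (-1 : k) g = 1 - g := by
  simp [cyclicSum, Finset.sum_range_succ, sub_eq_add_neg]

end CyclicSumTwo

section Presentation

variable {k : Type} [Field k] {n : ℕ} {q : k}

lemma K_pow_card : K k n q ^ n = 1 := by
  simpa only [K, map_pow, map_one] using RingQuot.mkAlgHom_rel k (Rel.Kord (q := q))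

lemma Kh_pow_card : Kh k n q ^ n = (K k n q ^ (n - 1)) ^ 2 := by
  simpa only [K, Kh, map_pow] using RingQuot.mkAlgHom_rel k (Rel.Khord (q := q))

lemma Kh_pow_sq : Kh k n q ^ n ^ 2 = 1 := by
  rw [sq, pow_mul, Kh_pow_card, ← pow_mul, ← pow_mul,
    show (n - 1) * (2 * n) = n * ((n - 1) * 2) by ring, pow_mul, K_pow_card, one_pow]

/-- The generators of `U k n q`. -/
def generators (hn : 0 < n) : QuasiGenerators (U k n q) n q where
  K := K k n q
  Kh := Kh k n q
  E := E k n q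
  F := F k n q
  K_pow := K_pow_card
  Kh_pow := Kh_pow_card
  commute := by
    rw [commute_iff_eq]
    simpa only [K, Kh, map_mul] using RingQuot.mkAlgHom_rel k (Rel.KKh (n := n) (q := q))
  qCommute_K_E := (mul_mul_pow_eq_smul_iff hn K_pow_card).1 <| by
    simpa only [K, E, map_mul, map_pow, map_smul] using RingQuot.mkAlgHom_rel k (Rel.KE (q := q))
  qCommute_K_F := (mul_mul_pow_eq_smul_iff hn K_pow_card).1 <| by
    simpa only [K, F, map_mul, map_pow, map_smul] using RingQuot.mkAlgHom_rel k (Rel.KF (q := q))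
  qCommute_Kh_E := (mul_mul_pow_eq_smul_iff (pow_pos hn 2) Kh_pow_sq).1 <| by
    simpa only [Kh, E, map_mul, map_pow, map_smul] using
      RingQuot.mkAlgHom_rel k (Rel.KhE (q := q))
  qCommute_Kh_F := (mul_mul_pow_eq_smul_iff (pow_pos hn 2) Kh_pow_sq).1 <| by
    simpa only [Kh, F, map_mul, map_pow, map_smul] using
      RingQuot.mkAlgHom_rel k (Rel.KhF (q := q))
  E_pow := by
    simpa only [E, map_pow, map_zero] using RingQuot.mkAlgHom_rel k (Rel.Enil (q := q))
  F_pow := by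
    simpa only [F, map_pow, map_zero] using RingQuot.mkAlgHom_rel k (Rel.Fnil (q := q))
  F_mul_E := by
    simpa only [K, Kh, E, F, map_sub, map_one, map_mul, map_pow, map_smul] using
      RingQuot.mkAlgHom_rel k (Rel.EF (n := n) (q := q))

section Lift

variable {B : Type*} [Ring B] [Algebra k B] (Y : QuasiGenerators B n q)

lemma lift_eq_of_rel (hn : 0 < n) {x y : FreeAlgebra k (Fin 4)} (h : Rel k n q x y) :
    FreeAlgebra.lift k ![Y.K, Y.Kh, Y.E, Y.F] x = FreeAlgebra.lift k ![Y.K, Y.Kh, Y.E, Y.F] y := by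
  induction h with
  | Kord => simpa using Y.K_pow
  | Khord => simpa using Y.Kh_pow
  | KKh => simpa using Y.commute.eq
  | KE => simpa using (mul_mul_pow_eq_smul_iff hn Y.K_pow).2 Y.qCommute_K_E
  | KF => simpa using (mul_mul_pow_eq_smul_iff hn Y.K_pow).2 Y.qCommute_K_F
  | KhE => simpa using (mul_mul_pow_eq_smul_iff (pow_pos hn 2) Y.Kh_sq_pow).2 Y.qCommute_Kh_E
  | KhF => simpa using (mul_mul_pow_eq_smul_iff (pow_pos hn 2) Y.Kh_sq_pow).2 Y.qCommute_Kh_F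
  | Enil => simpa using Y.E_pow
  | Fnil => simpa using Y.F_pow
  | EF => simpa using Y.F_mul_E

lemma exists_algHom_map_generators (hn : 0 < n) :
    ∃ φ : U k n q →ₐ[k] B, φ (K k n q) = Y.K ∧ φ (Kh k n q) = Y.Kh ∧ φ (E k n q) = Y.E ∧
      φ (F k n q) = Y.F :=
  ⟨RingQuot.liftAlgHom k
      ⟨FreeAlgebra.lift k ![Y.K, Y.Kh, Y.E, Y.F], fun _ _ => lift_eq_of_rel Y hn⟩,
    by simp [K], by simp [Kh], by simp [E], by simp [F]⟩

end Lift

lemma adjoin_generators : Algebra.adjoin k {K k n q, Kh k n q, E k n q, F k n q} = ⊤ := by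
  rw [eq_top_iff]
  rintro x -
  obtain ⟨y, rfl⟩ := RingQuot.mkAlgHom_surjective k (Rel k n q) x
  induction y using FreeAlgebra.induction with
  | grade0 c => rw [AlgHom.commutes]; exact Subalgebra.algebraMap_mem _ c
  | grade1 x =>
    refine Algebra.subset_adjoin ?_
    fin_cases x <;> simp [K, Kh, E, F]
  | mul a b ha hb => rw [map_mul]; exact mul_mem ha hb
  | add a b ha hb => rw [map_add]; exact add_mem ha hb

end Presentation

section Nondegenerate

variable {k : Type} [Field k] {n : ℕ} {q : k} (hn : 0 < n) (h4 : 4 ∣ n)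
  (hq : IsPrimitiveRoot q (n ^ 2))

/-- The generators `E`, `F`, `L = K⁻¹K̂` and `T = KK̂^(n/2)` of `U k n q`. -/
def sl2Generators : Sl2Generators (U k n q) (n ^ 2) q⁻¹ :=
  (generators hn).sl2Generators hn h4 hq

lemma adjoin_sl2Generators :
    Algebra.adjoin k {(sl2Generators hn h4 hq).E, (sl2Generators hn h4 hq).F,
      (sl2Generators hn h4 hq).L, (sl2Generators hn h4 hq).T} = ⊤ := by
  set X := sl2Generators hn h4 hq
  set S := Algebra.adjoin k {X.E, X.F, X.L, X.T}
  have hE : X.E ∈ S := Algebra.subset_adjoin (by simp)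
  have hF : X.F ∈ S := Algebra.subset_adjoin (by simp)
  have hL : X.L ∈ S := Algebra.subset_adjoin (by simp)
  have hT : X.T ∈ S := Algebra.subset_adjoin (by simp)
  have hTL : X.T * X.L ^ torusExponent n = K k n q := (generators hn).T_mul_L_pow hn h4
  have hKL : K k n q * X.L = Kh k n q := (generators hn).K_mul_L hn
  have hK : K k n q ∈ S := hTL ▸ mul_mem hT (pow_mem hL _)
  have hKh : Kh k n q ∈ S := hKL ▸ mul_mem hK hL
  rw [eq_top_iff, ← adjoin_generators, Algebra.adjoin_le_iff]
  rintro _ (rfl | rfl | rfl | rfl)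
  exacts [hK, hKh, hE, hF]

lemma exists_algHom_map_sl2Generators {B : Type*} [Ring B] [Algebra k B]
    (X : Sl2Generators B (n ^ 2) q⁻¹) (hF : X.F ^ n ^ 2 = 0) :
    ∃ φ : U k n q →ₐ[k] B, φ (sl2Generators hn h4 hq).E = X.E ∧
      φ (sl2Generators hn h4 hq).F = X.F ∧ φ (sl2Generators hn h4 hq).L = X.L ∧
      φ (sl2Generators hn h4 hq).T = X.T := by
  obtain ⟨φ, hK, hKh, hE, hF'⟩ := exists_algHom_map_generators (X.quasiGenerators hF h4 hq) hn
  refine ⟨φ, hE, hF', (Eq.trans ?_ (X.quasiGenerators_L hF h4 hq)),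
    (Eq.trans ?_ (X.quasiGenerators_T hF h4 hq))⟩
  · rw [QuasiGenerators.L, ← hK, ← hKh, ← map_pow, ← map_mul]
    rfl
  · rw [QuasiGenerators.T, ← hK, ← hKh, ← map_pow, ← map_mul]
    rfl

lemma isNondegenerate_sl2Generators : (sl2Generators hn h4 hq).IsNondegenerate :=
  Sl2Generators.isNondegenerate_of_forall_exists_module (M := LinkedModule k (n ^ 2))
    (adjoin_sl2Generators hn h4 hq) fun d τ hd hdN hτ => by
      have hN := (sl2Generators hn h4 hq).even
      obtain ⟨φ, hE, hF, hL, hT⟩ := exists_algHom_map_sl2Generators hn h4 hq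
        (linkedGenerators hq.inv hN hd hdN hτ) (linkedGenerators_F_pow hq.inv hN hd hdN hτ)
      obtain ⟨hmod, htower, h⟩ :=
        (isLinkedPair_linkedGenerators hq.inv hN hd hdN hτ).exists_module φ hE hF hL hT
      exact ⟨hmod, htower, _, _, h⟩

end Nondegenerate

section Gamma

variable {k : Type} [Field k] {n : ℕ} {q : k} (hn : 0 < n) (h4 : 4 ∣ n)
  (hq : IsPrimitiveRoot q (n ^ 2))

lemma oneJ_eq_smul_cyclicSum {j : ℕ} (hj : j ≤ 1) :
    oneJ k n q j = (2 : k)⁻¹ • cyclicSum 2 ((-1 : k) ^ j) (sl2Generators hn h4 hq).T := by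
  have hT : K k n q * Kh k n q ^ (n / 2) = (sl2Generators hn h4 hq).T := rfl
  interval_cases j
  · rw [oneJ, if_pos rfl, hT, pow_zero, cyclicSum_two_one]
  · rw [oneJ, if_neg one_ne_zero, hT, pow_one, cyclicSum_two_neg_one]

lemma phi_eq_smul_cyclicSum (i : ℕ) :
    phi k n q i = ((n ^ 2 : k)⁻¹ * 2) •
      cyclicSum (n ^ 2 / 2) ((q⁻¹ ^ 2) ^ i) (sl2Generators hn h4 hq).L := by
  simp only [phi, cyclicSum, ← pow_mul]
  rfl

lemma eIdem_eq_smul_weightSum (i : ℕ) {j : ℕ} (hj : j ≤ 1) :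
    eIdem k n q i j =
      ((n ^ 2 : k)⁻¹ * 2 * 2⁻¹) • (sl2Generators hn h4 hq).weightSum i j := by
  have hcomm := commute_cyclicSum (m := 2) (ζ := (-1 : k) ^ j)
    (commute_cyclicSum (m := n ^ 2 / 2) (ζ := (q⁻¹ ^ 2) ^ i)
      (sl2Generators hn h4 hq).commute.symm).symm
  rw [eIdem, phi_eq_smul_cyclicSum hn h4 hq, oneJ_eq_smul_cyclicSum hn h4 hq hj,
    smul_mul_smul_comm, Sl2Generators.weightSum, hcomm.eq]

lemma isLinkedPair_gam {i j : ℕ} (hi : 1 ≤ i) (hi2 : i ≤ n ^ 2 / 2) (hj : j ≤ 1) :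
    (sl2Generators hn h4 hq).IsLinkedPair (2 * i - 1) ((-1) ^ j) (alpha k n q i j)
      (gam k n q i j) := by
  set X := sl2Generators hn h4 hq
  have hpbw : pbw k n q = X.triangularSpan (n ^ 2 - 1) :=
    (generators hn).monomialSpan_eq_triangularSpan hn h4 hq
  have hex : ∃! x, x ∈ pbw k n q ∧ F k n q * x = beta k n q i j := by
    rw [hpbw]
    exact Sl2Generators.existsUnique_F_mul_eq (adjoin_sl2Generators hn h4 hq) (generators hn).F_pow
      (isNondegenerate_sl2Generators hn h4 hq) (by omega) (eIdem k n q i j)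
  have hgam : gam k n q i j = hex.choose := dif_pos hex
  obtain ⟨hmem, hF⟩ := hgam ▸ hex.choose_spec.1
  have hc : ((n ^ 2 : k)⁻¹ * 2 * 2⁻¹) ≠ 0 := by
    have hn2 := X.natCast_ne_zero
    have h2 := X.two_ne_zero
    push_cast at hn2
    simp [h2, hn2]
  have hα : alpha k n q i j =
      X.F ^ (n ^ 2 - 1) * ((n ^ 2 : k)⁻¹ * 2 * 2⁻¹) • X.weightSum i j :=
    congrArg (F k n q ^ (n ^ 2 - 1) * ·) (eIdem_eq_smul_weightSum hn h4 hq i hj)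
  rw [hα]
  rw [beta, hα] at hF
  exact Sl2Generators.isLinkedPair_of_mem_triangularSpan (generators hn).F_pow
    (isNondegenerate_sl2Generators hn h4 hq) hc hi (by omega) (hpbw ▸ hmem) hF

end Gamma

section Layers

open Submodule

variable {k : Type} [Field k] {n : ℕ} {q : k}

lemma idealMul_jrad (B : Submodule (U k n q) (U k n q)) :
    idealMul k n q (jrad k n q) B = Ring.jacobson (U k n q) • B := by
  rw [idealMul, jrad, Ideal.jacobson_bot]
  refine le_antisymm (span_le.2 ?_) (smul_le.2 fun a ha b hb => subset_span ⟨a, ha, b, hb, rfl⟩)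
  rintro _ ⟨a, ha, b, hb, rfl⟩
  exact smul_mem_smul ha hb

variable (hn : 0 < n) (h4 : 4 ∣ n) (hq : IsPrimitiveRoot q (n ^ 2)) {i j : ℕ} (hi : 1 ≤ i)
  (hi2 : i ≤ n ^ 2 / 2) (hj : j ≤ 1)

include hn h4 hq hi hi2 hj

lemma S_eq_span : S k n q i j =
    span (U k n q) {(sl2Generators hn h4 hq).E ^ (2 * i - 1) • alpha k n q i j} :=
  (isLinkedPair_gam hn h4 hq hi hi2 hj).sSup_isSimpleModule_eq (adjoin_sl2Generators hn h4 hq)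

lemma idealMul_jrad_P : idealMul k n q (jrad k n q) (P k n q i j) =
    (sl2Generators hn h4 hq).pairRadical (2 * i - 1) (alpha k n q i j) (gam k n q i j) := by
  have hG := adjoin_sl2Generators hn h4 hq
  have hF := (generators (q := q) hn).F_pow
  exact (idealMul_jrad _).trans <|
    (isLinkedPair_gam hn h4 hq hi hi2 hj).jacobson_smul_span_gamma hG
      (Sl2Generators.E_pow_mem_jacobson hG hF) (Sl2Generators.F_pow_mem_jacobson hG hF)

lemma idealMul_jrad_idealMul_jrad_P :
    idealMul k n q (jrad k n q) (idealMul k n q (jrad k n q) (P k n q i j)) = S k n q i j := by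
  have hG := adjoin_sl2Generators hn h4 hq
  rw [idealMul_jrad_P hn h4 hq hi hi2 hj, idealMul_jrad, S_eq_span hn h4 hq hi hi2 hj]
  exact (isLinkedPair_gam hn h4 hq hi hi2 hj).jacobson_smul_pairRadical hG
    (Sl2Generators.E_pow_mem_jacobson hG (generators hn).F_pow)

lemma isSimpleLowestWeight_linked :
    (sl2Generators hn h4 hq).IsSimpleLowestWeight (n ^ 2 - (2 * i - 1)) (-(-1) ^ j)
      ((sl2Generators hn h4 hq).E ^ (2 * (n ^ 2 / 2 - i + 1) - 1) •
        alpha k n q (n ^ 2 / 2 - i + 1) (1 - j)) := by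
  have heven := (sl2Generators hn h4 hq).even
  have h := (isLinkedPair_gam hn h4 hq (i := n ^ 2 / 2 - i + 1) (j := 1 - j) (by omega) (by omega)
    (by omega)).isSimpleLowestWeight
  have hsign : (-1 : k) ^ (1 - j) = -(-1) ^ j := by interval_cases j <;> simp
  have hd : 2 * (n ^ 2 / 2 - i + 1) - 1 = n ^ 2 - (2 * i - 1) := by grind
  rw [hsign] at h
  rwa [hd] at h ⊢

end Layers

end QFL

open QFL in
theorem statement12_general {k : Type} [Field k] {n : ℕ} (hn : 0 < n) (h4 : 4 ∣ n) {q : k}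
    (hq : IsPrimitiveRoot q (n ^ 2)) {i j : ℕ} (hi : 1 ≤ i) (hi2 : i ≤ n ^ 2 / 2) (hj : j ≤ 1) :
    (∃ f : (P k n q i j) →ₗ[U k n q] (S k n q i j),
      Function.Surjective f ∧
      LinearMap.ker f =
        Submodule.comap (P k n q i j).subtype
          (idealMul k n q (jrad k n q) (P k n q i j))) ∧
    (∃ g : (idealMul k n q (jrad k n q) (P k n q i j)) →ₗ[U k n q]
        ((S k n q (n ^ 2 / 2 - i + 1) (1 - j)) × (S k n q (n ^ 2 / 2 - i + 1) (1 - j))),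
      Function.Surjective g ∧
      LinearMap.ker g =
        Submodule.comap (idealMul k n q (jrad k n q) (P k n q i j)).subtype
          (idealMul k n q (jrad k n q)
            (idealMul k n q (jrad k n q) (P k n q i j)))) ∧
    idealMul k n q (jrad k n q) (idealMul k n q (jrad k n q) (P k n q i j)) =
      S k n q i j ∧
    Nonempty ((idealMul k n q (jrad k n q)
        (idealMul k n q (jrad k n q) (P k n q i j))) ≃ₗ[U k n q] (S k n q i j)) := by
  have hG := adjoin_sl2Generators hn h4 hq
  have h := isLinkedPair_gam hn h4 hq hi hi2 hj
  rw [idealMul_jrad_idealMul_jrad_P hn h4 hq hi hi2 hj, idealMul_jrad_P hn h4 hq hi hi2 hj,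
    S_eq_span hn h4 hq hi hi2 hj, S_eq_span hn h4 hq (i := n ^ 2 / 2 - i + 1) (j := 1 - j)
      (by omega) (by omega) (by omega), P]
  exact ⟨h.exists_linearMap_span_gamma hG,
    h.exists_linearMap_pairRadical hG (isSimpleLowestWeight_linked hn h4 hq hi hi2 hj), rfl,
    ⟨LinearEquiv.refl _ _⟩⟩

open QFL in
/-- The Loewy structure of `P_{2i,j}`: `P/JP ≅ S_{2i,j}`,
`JP/J²P ≅ S_{n²-2i+2,j'} ⊕ S_{n²-2i+2,j'}` and `J²P = Soc(P) ≅ S_{2i,j}`, where `J` is the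
Jacobson radical.  The quotient isomorphisms are expressed by surjective `u`-linear maps
with the appropriate kernels. -/
theorem statement12 (k : Type) [Field k] [IsAlgClosed k] [CharZero k]
    (n : ℕ) (hn : 0 < n) (h4 : 4 ∣ n) (q : k) (hq : IsPrimitiveRoot q (n ^ 2)) :
    ∀ i j : ℕ, 1 ≤ i → i ≤ n ^ 2 / 2 → j ≤ 1 →
      (∃ f : (P k n q i j) →ₗ[U k n q] (S k n q i j),
        Function.Surjective f ∧
        LinearMap.ker f =
          Submodule.comap (P k n q i j).subtype
            (idealMul k n q (jrad k n q) (P k n q i j))) ∧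
      (∃ g : (idealMul k n q (jrad k n q) (P k n q i j)) →ₗ[U k n q]
          ((S k n q (n ^ 2 / 2 - i + 1) (1 - j)) × (S k n q (n ^ 2 / 2 - i + 1) (1 - j))),
        Function.Surjective g ∧
        LinearMap.ker g =
          Submodule.comap (idealMul k n q (jrad k n q) (P k n q i j)).subtype
            (idealMul k n q (jrad k n q)
              (idealMul k n q (jrad k n q) (P k n q i j)))) ∧
      idealMul k n q (jrad k n q) (idealMul k n q (jrad k n q) (P k n q i j)) =
        S k n q i j ∧
      Nonempty ((idealMul k n q (jrad k n q)
          (idealMul k n q (jrad k n q) (P k n q i j))) ≃ₗ[U k n q] (S k n q i j)) := by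
  exact fun _ _ => statement12_general hn h4 hq
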